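/- arXiv:2103.07498 — 5 statements merged into one kernel-verified Lean document; each statement's English description precedes it below -/
import Mathlib

section
/- There exists a constant C > 0 (independent of n) such that for every n ≥ 4, sup_{x ∈ ℝ} | P( (R_n − E[R_n]) / sqrt(Var(R_n)) ≤ x ) − Φ(x) | ≤ C / n^{1/3}, where R_n is the number of descents of a uniformly random derangement of the symmetric group S_n and Φ is the cumulative distribution function of the standard normal distribution. -/
open Finset

/-- The number of descents of a permutation of `Fin n`:
positions `i` with `i+1 < n` and `π(i) > π(i+1)`. -/
def descents {n : ℕ} (π : Equiv.Perm (Fin n)) : ℕ :=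
  (Finset.univ.filter fun i : Fin n =>
    ∃ h : (i : ℕ) + 1 < n, π ⟨(i : ℕ) + 1, h⟩ < π i).card

/-- The derangements of the symmetric group `S_n`. -/
def derangementSet (n : ℕ) : Finset (Equiv.Perm (Fin n)) :=
  Finset.univ.filter fun π => ∀ i, π i ≠ i

/-- The standard normal cumulative distribution function. -/
noncomputable def stdNormalCDF (x : ℝ) : ℝ :=
  (Real.sqrt (2 * Real.pi))⁻¹ * ∫ t in Set.Iic x, Real.exp (-(t ^ 2) / 2)

/-- Mean number of descents of a uniformly random derangement of `S_n`. -/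
noncomputable def derMean (n : ℕ) : ℝ :=
  (∑ π ∈ derangementSet n, (descents π : ℝ)) / (derangementSet n).card

/-- Variance of the number of descents of a uniformly random derangement of `S_n`. -/
noncomputable def derVar (n : ℕ) : ℝ :=
  (∑ π ∈ derangementSet n, ((descents π : ℝ) - derMean n) ^ 2) / (derangementSet n).card

/-- `P((R_n - E R_n)/sqrt(Var R_n) ≤ x)` under the uniform measure on derangements. -/
noncomputable def derCDF (n : ℕ) (x : ℝ) : ℝ :=
  (((derangementSet n).filter fun π =>
      ((descents π : ℝ) - derMean n) / Real.sqrt (derVar n) ≤ x).card : ℝ) /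
    (derangementSet n).card

/-
Read on the circle `ℝ / ℤ`, a descent of a word of reals in `[0, 1)` is a step whose increment wraps
around `0`. Hence the representatives in `[0, 1)` of the increments of the word sum to its number of
descents plus its last letter. If the letters are iid uniform, then so are the increments, and the
relative order of the letters is a uniform permutation: up to an error in `[0, 1)`, the number of
descents of a uniform permutation is a sum of `n` iid uniform variables. Stein's method gives a
Berry–Esseen bound of order `n ^ (-1/2)` for this sum.

To pass to derangements, use inclusion–exclusion over the set `A` of prescribed fixed points. A
uniform permutation becomes a uniform permutation fixing `A` after `|A|` exchanges of values, each
changing the number of descents by at most `4`. The terms with `|A| = j` therefore contribute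
`O(c ^ j / j!)` times the effect of a bounded perturbation of the number of descents, and the sum
over `j` converges.
-/

open MeasureTheory ProbabilityTheory Filter Topology
open scoped BigOperators

local notation "φ" => gaussianPDFReal 0 1
local notation "Φ" => stdNormalCDF

section Gaussian

lemma gaussianPDFReal_zero_one_eq (x : ℝ) : φ x = (√(2 * Real.pi))⁻¹ * Real.exp (-(x ^ 2) / 2) := by
  simp [gaussianPDFReal]

lemma gaussianPDFReal_zero_one_pos (x : ℝ) : 0 < φ x := gaussianPDFReal_pos 0 1 x one_ne_zero

lemma gaussianPDFReal_zero_one_neg (x : ℝ) : φ (-x) = φ x := by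
  simp [gaussianPDFReal_zero_one_eq]

lemma gaussianPDFReal_zero_one_abs (x : ℝ) : φ |x| = φ x := by
  simp [gaussianPDFReal_zero_one_eq]

lemma hasDerivAt_gaussianPDFReal_zero_one (x : ℝ) : HasDerivAt φ (-x * φ x) x := by
  have hexponent : HasDerivAt (fun t : ℝ => -(t ^ 2) / 2) (-x) x :=
    ((hasDerivAt_pow 2 x).neg.div_const 2).congr_deriv (by simp; ring)
  rw [funext gaussianPDFReal_zero_one_eq]
  exact (hexponent.exp.const_mul _).congr_deriv (by ring)

lemma continuous_gaussianPDFReal_zero_one : Continuous φ :=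
  continuous_iff_continuousAt.mpr fun x => (hasDerivAt_gaussianPDFReal_zero_one x).continuousAt

lemma tendsto_gaussianPDFReal_zero_one_atTop : Tendsto φ atTop (𝓝 0) := by
  have hexponent : Tendsto (fun t : ℝ => -(t ^ 2) / 2) atTop atBot := by
    simp only [neg_div, tendsto_neg_atBot_iff]
    exact (tendsto_pow_atTop two_ne_zero).atTop_div_const two_pos
  rw [funext gaussianPDFReal_zero_one_eq]
  simpa using (Real.tendsto_exp_atBot.comp hexponent).const_mul (√(2 * Real.pi))⁻¹

lemma two_le_sqrt_two_pi : 2 ≤ √(2 * Real.pi) :=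
  Real.le_sqrt_of_sq_le (by linarith [Real.pi_gt_three])

lemma sqrt_two_pi_le_three : √(2 * Real.pi) ≤ 3 :=
  Real.sqrt_le_iff.mpr ⟨by norm_num, by linarith [Real.pi_lt_four]⟩

lemma gaussianPDFReal_zero_one_mul_le (x : ℝ) : φ x * (1 + x ^ 2 / 2) ≤ 1 / 2 := by
  have hexp : Real.exp (-(x ^ 2) / 2) * (1 + x ^ 2 / 2) ≤ 1 := by
    rw [neg_div, Real.exp_neg, inv_mul_le_one₀ (Real.exp_pos _), add_comm]
    exact Real.add_one_le_exp _
  have hinv : (√(2 * Real.pi))⁻¹ ≤ 1 / 2 := by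
    rw [one_div]; exact inv_anti₀ two_pos two_le_sqrt_two_pi
  rw [gaussianPDFReal_zero_one_eq, mul_assoc]
  exact (mul_le_mul hinv hexp (by positivity) (by norm_num)).trans_eq (by norm_num)

lemma gaussianPDFReal_zero_one_le_one (x : ℝ) : φ x ≤ 1 := by
  nlinarith [gaussianPDFReal_zero_one_mul_le x, gaussianPDFReal_zero_one_pos x, sq_nonneg x]

lemma abs_mul_gaussianPDFReal_zero_one_le_one (x : ℝ) : |x| * φ x ≤ 1 := by
  have habs : |x| ≤ 2 * (1 + x ^ 2 / 2) := by nlinarith [sq_abs x, sq_nonneg (|x| - 1)]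
  nlinarith [gaussianPDFReal_zero_one_mul_le x,
    mul_le_mul_of_nonneg_left habs (gaussianPDFReal_zero_one_pos x).le]

lemma stdNormalCDF_eq_setIntegral (x : ℝ) : Φ x = ∫ t in Set.Iic x, φ t := by
  simp only [stdNormalCDF, gaussianPDFReal_zero_one_eq, integral_const_mul]

lemma stdNormalCDF_eq_cdf (x : ℝ) : Φ x = cdf (gaussianReal 0 1) x := by
  rw [cdf_eq_real, measureReal_def, gaussianReal_apply_eq_integral 0 one_ne_zero,
    ENNReal.toReal_ofReal (integral_nonneg fun t => gaussianPDFReal_nonneg 0 1 t),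
    stdNormalCDF_eq_setIntegral]

lemma stdNormalCDF_nonneg (x : ℝ) : 0 ≤ Φ x :=
  stdNormalCDF_eq_cdf x ▸ cdf_nonneg _ x

lemma stdNormalCDF_le_one (x : ℝ) : Φ x ≤ 1 :=
  stdNormalCDF_eq_cdf x ▸ cdf_le_one _ x

lemma stdNormalCDF_mono : Monotone Φ :=
  funext stdNormalCDF_eq_cdf ▸ monotone_cdf _

lemma one_sub_stdNormalCDF (x : ℝ) : 1 - Φ x = ∫ t in Set.Ioi x, φ t := by
  rw [stdNormalCDF_eq_setIntegral, ← integral_gaussianPDFReal_eq_one 0 one_ne_zero,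
    ← integral_add_compl (measurableSet_Iic (a := x)) (integrable_gaussianPDFReal 0 1),
    Set.compl_Iic, add_sub_cancel_left]

lemma stdNormalCDF_neg (x : ℝ) : Φ (-x) = 1 - Φ x := by
  rw [one_sub_stdNormalCDF, stdNormalCDF_eq_setIntegral, ← neg_neg x, ← integral_comp_neg_Iic,
    neg_neg]
  simp only [gaussianPDFReal_zero_one_neg]

lemma hasDerivAt_stdNormalCDF (x : ℝ) : HasDerivAt Φ (φ x) x := by
  have hsplit : Φ = fun y => Φ 0 + ∫ t in (0 : ℝ)..y, φ t := by
    funext y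
    rw [stdNormalCDF_eq_setIntegral y, stdNormalCDF_eq_setIntegral 0,
      ← intervalIntegral.integral_Iic_sub_Iic (integrable_gaussianPDFReal 0 1).integrableOn
        (integrable_gaussianPDFReal 0 1).integrableOn, add_sub_cancel]
  rw [hsplit]
  exact (continuous_gaussianPDFReal_zero_one.integral_hasStrictDerivAt 0 x).hasDerivAt.const_add _

lemma continuous_stdNormalCDF : Continuous Φ :=
  continuous_iff_continuousAt.mpr fun x => (hasDerivAt_stdNormalCDF x).continuousAt

lemma abs_stdNormalCDF_sub_le (x y : ℝ) : |Φ x - Φ y| ≤ |x - y| := by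
  have hbound (t : ℝ) : ‖φ t‖ ≤ 1 := by
    rw [Real.norm_of_nonneg (gaussianPDFReal_nonneg 0 1 t)]
    exact gaussianPDFReal_zero_one_le_one t
  simpa using convex_univ.norm_image_sub_le_of_norm_hasDerivWithin_le
    (fun t _ => (hasDerivAt_stdNormalCDF t).hasDerivWithinAt) (fun t _ => hbound t)
    (Set.mem_univ y) (Set.mem_univ x)

lemma abs_stdNormalCDF_sub_le_one (x y : ℝ) : |Φ x - Φ y| ≤ 1 :=
  abs_sub_le_of_nonneg_of_le (stdNormalCDF_nonneg x) (stdNormalCDF_le_one x)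
    (stdNormalCDF_nonneg y) (stdNormalCDF_le_one y)

lemma abs_stdNormalCDF_mul_sub_le (a x : ℝ) : |Φ (a * x) - Φ x| ≤ 2 * |a - 1| := by
  rcases le_total a (1 / 2) with hsmall | hlarge
  · rw [abs_of_nonpos (by linarith : a - 1 ≤ 0)]
    linarith [abs_stdNormalCDF_sub_le_one (a * x) x]
  have hderiv (s : ℝ) : HasDerivAt (fun s => Φ (s * x)) (φ (s * x) * x) s :=
    HasDerivAt.comp (h₂ := Φ) s (hasDerivAt_stdNormalCDF (s * x)) (hasDerivAt_mul_const x)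
  have hbound (s : ℝ) (hs : s ∈ Set.Ici (1 / 2 : ℝ)) : ‖φ (s * x) * x‖ ≤ 2 := by
    have hs : (1 / 2 : ℝ) ≤ s := hs
    rw [norm_mul, Real.norm_of_nonneg (gaussianPDFReal_nonneg 0 1 _), Real.norm_eq_abs]
    have hx : |x| ≤ 2 * |s * x| := by
      rw [abs_mul, abs_of_nonneg (by linarith : 0 ≤ s)]
      nlinarith [abs_nonneg x]
    nlinarith [abs_mul_gaussianPDFReal_zero_one_le_one (s * x),
      mul_le_mul_of_nonneg_left hx (gaussianPDFReal_nonneg 0 1 (s * x))]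
  simpa using (convex_Ici (1 / 2 : ℝ)).norm_image_sub_le_of_norm_hasDerivWithin_le
    (fun s _ => (hderiv s).hasDerivWithinAt) hbound
    (Set.mem_Ici.mpr (by norm_num : (1 / 2 : ℝ) ≤ 1)) (Set.mem_Ici.mpr hlarge)

lemma mul_one_sub_stdNormalCDF_le {w : ℝ} (hw : 0 ≤ w) : w * (1 - Φ w) ≤ φ w := by
  have hderiv : ∀ t ∈ Set.Ici w, HasDerivAt (fun t => -φ t) (t * φ t) t := fun t _ =>
    (hasDerivAt_gaussianPDFReal_zero_one t).neg.congr_deriv (by ring)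
  have hnonneg : ∀ t ∈ Set.Ioi w, 0 ≤ t * φ t := fun t ht =>
    mul_nonneg (hw.trans (Set.mem_Ioi.mp ht).le) (gaussianPDFReal_nonneg 0 1 t)
  have hlim : Tendsto (fun t => -φ t) atTop (𝓝 0) := by
    simpa using tendsto_gaussianPDFReal_zero_one_atTop.neg
  calc w * (1 - Φ w) = ∫ t in Set.Ioi w, w * φ t := by
        rw [one_sub_stdNormalCDF, integral_const_mul]
    _ ≤ ∫ t in Set.Ioi w, t * φ t :=
        setIntegral_mono_on ((integrable_gaussianPDFReal 0 1).integrableOn.const_mul w)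
          (integrableOn_Ioi_deriv_of_nonneg' hderiv hnonneg hlim) measurableSet_Ioi fun t ht =>
          mul_le_mul_of_nonneg_right (Set.mem_Ioi.mp ht).le (gaussianPDFReal_nonneg 0 1 t)
    _ = φ w := by
        rw [integral_Ioi_of_hasDerivAt_of_nonneg' hderiv hnonneg hlim, zero_sub, neg_neg]

/-- The Mills ratio of the standard normal distribution. -/
noncomputable def millsRatio (w : ℝ) : ℝ := (1 - Φ w) / φ w

lemma mul_millsRatio_le_one {w : ℝ} (hw : 0 ≤ w) : w * millsRatio w ≤ 1 := by
  rw [millsRatio, ← mul_div_assoc, div_le_one (gaussianPDFReal_zero_one_pos w)]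
  exact mul_one_sub_stdNormalCDF_le hw

lemma hasDerivAt_millsRatio (w : ℝ) : HasDerivAt millsRatio (w * millsRatio w - 1) w := by
  have hpos := (gaussianPDFReal_zero_one_pos w).ne'
  refine (((hasDerivAt_stdNormalCDF w).const_sub 1).div
    (hasDerivAt_gaussianPDFReal_zero_one w) hpos).congr_deriv ?_
  rw [millsRatio]
  field_simp
  ring

lemma millsRatio_antitoneOn : AntitoneOn millsRatio (Set.Ici 0) := by
  refine antitoneOn_of_deriv_nonpos (convex_Ici 0)
    (fun w _ => (hasDerivAt_millsRatio w).continuousAt.continuousWithinAt)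
    (fun w _ => (hasDerivAt_millsRatio w).differentiableAt.differentiableWithinAt) fun w hw => ?_
  rw [interior_Ici, Set.mem_Ioi] at hw
  rw [(hasDerivAt_millsRatio w).deriv]
  linarith [mul_millsRatio_le_one hw.le]

lemma millsRatio_le_two {w : ℝ} (hw : 0 ≤ w) : millsRatio w ≤ 2 := by
  have hhalf : Φ 0 = 1 / 2 := by linarith [stdNormalCDF_neg 0, congrArg Φ (neg_zero (G := ℝ))]
  have hpeak : φ 0 = (√(2 * Real.pi))⁻¹ := by simp [gaussianPDFReal_zero_one_eq]
  calc millsRatio w ≤ millsRatio 0 :=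
        millsRatio_antitoneOn Set.self_mem_Ici (Set.mem_Ici.mpr hw) hw
    _ = √(2 * Real.pi) / 2 := by
        rw [millsRatio, hhalf, hpeak, div_inv_eq_mul]
        ring
    _ ≤ 2 := by linarith [sqrt_two_pi_le_three]

end Gaussian

section SteinEquation

/-- The bounded solution `f` of Stein's equation `f' w - w * f w = 1_{w ≤ z} - Φ z`. The usual
two-branch formula is written with `min` and `max`. -/
noncomputable def steinSolution (z w : ℝ) : ℝ := Φ (min w z) * (1 - Φ (max w z)) / φ w

/-- The derivative of `steinSolution z`, extended to the kink `w = z` by Stein's equation. -/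
noncomputable def steinDeriv (z w : ℝ) : ℝ :=
  w * steinSolution z w + (if w ≤ z then 1 else 0) - Φ z

variable (z : ℝ)

lemma steinSolution_nonneg (w : ℝ) : 0 ≤ steinSolution z w :=
  div_nonneg (mul_nonneg (stdNormalCDF_nonneg _) (sub_nonneg.mpr (stdNormalCDF_le_one _)))
    (gaussianPDFReal_nonneg 0 1 w)

lemma steinSolution_le_millsRatio_abs (w : ℝ) : steinSolution z w ≤ millsRatio |w| := by
  rw [steinSolution, millsRatio, gaussianPDFReal_zero_one_abs]
  refine div_le_div_of_nonneg_right ?_ (gaussianPDFReal_nonneg 0 1 w)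
  have hmin := stdNormalCDF_mono (min_le_left w z)
  have hmax := stdNormalCDF_mono (le_max_left w z)
  have h0 := stdNormalCDF_nonneg (min w z)
  have h1 := stdNormalCDF_le_one (max w z)
  rcases le_total 0 w with hw | hw
  · rw [abs_of_nonneg hw]
    nlinarith [stdNormalCDF_le_one (min w z)]
  · rw [abs_of_nonpos hw, stdNormalCDF_neg]
    nlinarith [stdNormalCDF_nonneg (max w z)]

lemma steinSolution_le_two (w : ℝ) : steinSolution z w ≤ 2 :=
  (steinSolution_le_millsRatio_abs z w).trans (millsRatio_le_two (abs_nonneg w))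

lemma abs_mul_steinSolution_le_one (w : ℝ) : |w * steinSolution z w| ≤ 1 := by
  rw [abs_mul, abs_of_nonneg (steinSolution_nonneg z w)]
  exact (mul_le_mul_of_nonneg_left (steinSolution_le_millsRatio_abs z w) (abs_nonneg w)).trans
    (mul_millsRatio_le_one (abs_nonneg w))

lemma continuous_steinSolution : Continuous (steinSolution z) :=
  ((continuous_stdNormalCDF.comp (continuous_id.min continuous_const)).mul
    (continuous_const.sub (continuous_stdNormalCDF.comp (continuous_id.max continuous_const)))).div
    continuous_gaussianPDFReal_zero_one fun w => (gaussianPDFReal_zero_one_pos w).ne'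

lemma measurable_steinDeriv : Measurable (steinDeriv z) :=
  ((measurable_id.mul (continuous_steinSolution z).measurable).add
    (Measurable.ite measurableSet_Iic measurable_const measurable_const)).sub_const _

variable {z} in
lemma hasDerivAt_steinSolution {w : ℝ} (hw : w ≠ z) :
    HasDerivAt (steinSolution z) (steinDeriv z w) w := by
  have hpos := (gaussianPDFReal_zero_one_pos w).ne'
  have hφ := hasDerivAt_gaussianPDFReal_zero_one w
  have hΦ := hasDerivAt_stdNormalCDF w
  rcases hw.lt_or_gt with hlt | hgt
  · have hbranch : steinSolution z =ᶠ[𝓝 w] fun v => Φ v * (1 - Φ z) / φ v := by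
      filter_upwards [Iio_mem_nhds hlt] with v hv
      rw [steinSolution, min_eq_left (Set.mem_Iio.mp hv).le, max_eq_right (Set.mem_Iio.mp hv).le]
    refine (((hΦ.mul_const (1 - Φ z)).div hφ hpos).congr_of_eventuallyEq hbranch).congr_deriv ?_
    rw [steinDeriv, hbranch.eq_of_nhds, if_pos hlt.le]
    field_simp
    ring
  · have hbranch : steinSolution z =ᶠ[𝓝 w] fun v => Φ z * (1 - Φ v) / φ v := by
      filter_upwards [Ioi_mem_nhds hgt] with v hv
      rw [steinSolution, min_eq_right (Set.mem_Ioi.mp hv).le, max_eq_left (Set.mem_Ioi.mp hv).le]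
    refine ((((hΦ.const_sub 1).const_mul (Φ z)).div hφ hpos).congr_of_eventuallyEq
      hbranch).congr_deriv ?_
    rw [steinDeriv, hbranch.eq_of_nhds, if_neg hgt.not_ge]
    field_simp
    ring

lemma abs_steinDeriv_le_two (w : ℝ) : |steinDeriv z w| ≤ 2 := by
  have hw := abs_le.mp (abs_mul_steinSolution_le_one z w)
  have h0 := stdNormalCDF_nonneg z
  have h1 := stdNormalCDF_le_one z
  rw [steinDeriv, abs_le]
  split_ifs <;> constructor <;> linarith

lemma intervalIntegrable_steinDeriv (a b : ℝ) : IntervalIntegrable (steinDeriv z) volume a b :=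
  (intervalIntegrable_const (c := (2 : ℝ))).mono_fun (measurable_steinDeriv z).aestronglyMeasurable
    (.of_forall fun w => by simpa using abs_steinDeriv_le_two z w)

lemma integral_steinDeriv (a b : ℝ) :
    ∫ w in a..b, steinDeriv z w = steinSolution z b - steinSolution z a :=
  integral_eq_of_hasDerivAt_off_countable _ _ (Set.countable_singleton z)
    (continuous_steinSolution z).continuousOn (fun _ hw => hasDerivAt_steinSolution hw.2)
    (intervalIntegrable_steinDeriv z a b)

lemma abs_steinSolution_sub_le (a b : ℝ) :
    |steinSolution z b - steinSolution z a| ≤ 2 * |b - a| := by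
  rw [← integral_steinDeriv, ← Real.norm_eq_abs]
  exact intervalIntegral.norm_integral_le_of_norm_le_const fun w _ => abs_steinDeriv_le_two z w

variable {z} {M : ℝ}

lemma steinSolution_sub_le {a b : ℝ} (hab : a ≤ b)
    (hM : ∀ y ∈ Set.Icc a b, steinDeriv z y ≤ M) :
    steinSolution z b - steinSolution z a ≤ (b - a) * M := by
  rw [← integral_steinDeriv, ← smul_eq_mul, ← intervalIntegral.integral_const]
  exact intervalIntegral.integral_mono_on hab (intervalIntegrable_steinDeriv z a b)
    intervalIntegrable_const hM

lemma mul_steinSolution_add_sub_le {a x : ℝ} (hM : ∀ y, |y - a| ≤ |x| → steinDeriv z y ≤ M) :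
    x * (steinSolution z (a + x) - steinSolution z a) ≤ x ^ 2 * M := by
  rcases le_total 0 x with hx | hx
  · have h := steinSolution_sub_le (le_add_of_nonneg_right hx) fun y hy => hM y <| by
      rw [abs_of_nonneg hx, abs_of_nonneg (sub_nonneg.mpr hy.1)]; linarith [hy.2]
    nlinarith
  · have h := steinSolution_sub_le (add_le_of_nonpos_right hx) fun y hy => hM y <| by
      rw [abs_of_nonpos hx, abs_of_nonpos (sub_nonpos.mpr hy.2)]; linarith [hy.1]
    nlinarith

lemma abs_mul_steinSolution_sub_le (y w : ℝ) :
    |y * steinSolution z y - w * steinSolution z w| ≤ (2 * |w| + 2) * |y - w| := by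
  calc |y * steinSolution z y - w * steinSolution z w|
      = |w * (steinSolution z y - steinSolution z w) + (y - w) * steinSolution z y| := by ring_nf
    _ ≤ |w| * |steinSolution z y - steinSolution z w| + |y - w| * |steinSolution z y| := by
        rw [← abs_mul, ← abs_mul]; exact abs_add_le _ _
    _ ≤ |w| * (2 * |y - w|) + |y - w| * 2 := by
        gcongr
        · exact abs_steinSolution_sub_le z w y
        · rw [abs_of_nonneg (steinSolution_nonneg z y)]; exact steinSolution_le_two z y
    _ = (2 * |w| + 2) * |y - w| := by ring

/-- A majorant of `steinDeriv z` on the ball of radius `δ` around `w`. -/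
noncomputable def steinMajorant (z δ w : ℝ) : ℝ :=
  w * steinSolution z w + (if w ≤ z + δ then 1 else 0) - Φ z + (2 * |w| + 2) * δ

lemma ite_le_ite_of_abs_sub_le {y w δ t : ℝ} (h : |y - w| ≤ δ) :
    (if y ≤ t then (1 : ℝ) else 0) ≤ if w ≤ t + δ then 1 else 0 := by
  have := (abs_le.mp h).1
  split_ifs <;> linarith

lemma mul_steinSolution_le_of_abs_sub_le {y w δ : ℝ} (h : |y - w| ≤ δ) :
    y * steinSolution z y ≤ w * steinSolution z w + (2 * |w| + 2) * δ := by
  have hprod := (le_abs_self _).trans (abs_mul_steinSolution_sub_le (z := z) y w)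
  have hδ : (2 * |w| + 2) * |y - w| ≤ (2 * |w| + 2) * δ := by gcongr
  linarith

lemma steinDeriv_le_steinMajorant {y w δ : ℝ} (h : |y - w| ≤ δ) :
    steinDeriv z y ≤ steinMajorant z δ w := by
  rw [steinDeriv, steinMajorant]
  linarith [mul_steinSolution_le_of_abs_sub_le (z := z) h, ite_le_ite_of_abs_sub_le (t := z) h]

lemma steinMajorant_le {w v δ : ℝ} (h : |w - v| ≤ δ) :
    steinMajorant z δ v ≤
      w * steinSolution z w + (if w ≤ z + 2 * δ then 1 else 0) - Φ z + (4 * |v| + 4) * δ := by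
  have hind := ite_le_ite_of_abs_sub_le (t := z + δ) (abs_sub_comm w v ▸ h)
  rw [add_assoc, ← two_mul] at hind
  have hprod := (neg_le_abs _).trans (abs_mul_steinSolution_sub_le (z := z) w v)
  have hδ : (2 * |v| + 2) * |w - v| ≤ (2 * |v| + 2) * δ := by gcongr
  rw [steinMajorant]
  linarith

lemma measurable_steinMajorant {z δ : ℝ} : Measurable (steinMajorant z δ) :=
  (((measurable_id.mul (continuous_steinSolution z).measurable).add
    (Measurable.ite measurableSet_Iic measurable_const measurable_const)).sub_const _).add
    (((measurable_id.abs.const_mul 2).add_const 2).mul_const δ)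

end SteinEquation

section BerryEsseen

variable {Ω : Type*} [MeasurableSpace Ω] {P : Measure Ω}

lemma integral_ite_one_zero {p : Ω → Prop} [DecidablePred p] (hp : MeasurableSet {ω | p ω}) :
    ∫ ω, (if p ω then (1 : ℝ) else 0) ∂P = P.real {ω | p ω} := by
  rw [← integral_indicator_one hp]
  exact integral_congr_ae (.of_forall fun ω => by simp [Set.indicator_apply])

lemma integrable_mul_steinSolution_comp (z : ℝ) {Y T : Ω → ℝ} (hY : Integrable Y P)
    (hT : Measurable T) : Integrable (fun ω => Y ω * steinSolution z (T ω)) P :=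
  hY.mul_bdd (c := 2) ((continuous_steinSolution z).measurable.comp hT).aestronglyMeasurable
    (.of_forall fun ω => by
      rw [Real.norm_of_nonneg (steinSolution_nonneg z _)]; exact steinSolution_le_two z _)

variable [IsProbabilityMeasure P]

lemma integrable_ite_one_zero {p : Ω → Prop} [DecidablePred p] (hp : MeasurableSet {ω | p ω}) :
    Integrable (fun ω => if p ω then (1 : ℝ) else 0) P :=
  .of_bound (Measurable.ite hp measurable_const measurable_const).aestronglyMeasurable 1
    (.of_forall fun ω => by split_ifs <;> simp)

lemma integrable_mul_steinSolution (z : ℝ) {W : Ω → ℝ} (hW : Measurable W) :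
    Integrable (fun ω => W ω * steinSolution z (W ω)) P :=
  .of_bound (hW.mul ((continuous_steinSolution z).measurable.comp hW)).aestronglyMeasurable 1
    (.of_forall fun ω => abs_mul_steinSolution_le_one z (W ω))

lemma integrable_steinMajorant_comp {z δ : ℝ} {V : Ω → ℝ} (hV : Measurable V)
    (hVint : Integrable V P) : Integrable (fun ω => steinMajorant z δ (V ω)) P :=
  (((integrable_mul_steinSolution z hV).add
    (integrable_ite_one_zero (measurableSet_le hV measurable_const))).sub
    (integrable_const (Φ z))).add
    (((hVint.abs.const_mul 2).add (integrable_const 2)).mul_const δ)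

lemma integral_steinMajorant_le {z δ : ℝ} {V W : Ω → ℝ} (hV : Measurable V) (hW : Measurable W)
    (hVint : Integrable V P) (hV1 : ∫ ω, |V ω| ∂P ≤ 1) (hδ : 0 ≤ δ)
    (hWV : ∀ ω, |W ω - V ω| ≤ δ) :
    ∫ ω, steinMajorant z δ (V ω) ∂P ≤
      ∫ ω, W ω * steinSolution z (W ω) ∂P + P.real {ω | W ω ≤ z + 2 * δ} - Φ z + 8 * δ := by
  have hWS := integrable_mul_steinSolution (P := P) z hW
  have hmeas : MeasurableSet {ω | W ω ≤ z + 2 * δ} := measurableSet_le hW measurable_const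
  have hite := integrable_ite_one_zero (P := P) hmeas
  have hV4 : Integrable (fun ω => 4 * |V ω|) P := hVint.abs.const_mul 4
  have hrest : Integrable (fun ω => (4 * |V ω| + 4) * δ) P :=
    (hV4.add (integrable_const 4)).mul_const δ
  have hsum : Integrable
      (fun ω => W ω * steinSolution z (W ω) + (if W ω ≤ z + 2 * δ then 1 else 0)) P := hWS.add hite
  have hmain : Integrable
      (fun ω => W ω * steinSolution z (W ω) + (if W ω ≤ z + 2 * δ then 1 else 0) - Φ z) P :=
    hsum.sub (integrable_const _)
  calc ∫ ω, steinMajorant z δ (V ω) ∂P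
      ≤ ∫ ω, (W ω * steinSolution z (W ω) + (if W ω ≤ z + 2 * δ then 1 else 0) - Φ z
          + (4 * |V ω| + 4) * δ) ∂P :=
        integral_mono (integrable_steinMajorant_comp hV hVint) (hmain.add hrest)
          fun ω => steinMajorant_le (hWV ω)
    _ = ∫ ω, W ω * steinSolution z (W ω) ∂P + P.real {ω | W ω ≤ z + 2 * δ} - Φ z
          + (4 * ∫ ω, |V ω| ∂P + 4) * δ := by
        rw [integral_add hmain hrest, integral_sub hsum (integrable_const _),
          integral_add hWS hite, integral_ite_one_zero hmeas, integral_mul_const,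
          integral_add hV4 (integrable_const 4), integral_const_mul]
        simp
    _ ≤ _ := by nlinarith

lemma integral_mul_steinSolution_add_le {z δ : ℝ} {V Y : Ω → ℝ} (hVY : IndepFun V Y P)
    (hV : Measurable V) (hY : Measurable Y) (hVint : Integrable V P) (hYδ : ∀ ω, |Y ω| ≤ δ)
    (hY0 : ∫ ω, Y ω ∂P = 0) :
    ∫ ω, Y ω * steinSolution z (V ω + Y ω) ∂P ≤
      (∫ ω, Y ω ^ 2 ∂P) * ∫ ω, steinMajorant z δ (V ω) ∂P := by
  have hf := (continuous_steinSolution z).measurable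
  have hU := measurable_steinMajorant (z := z) (δ := δ)
  have hYint : Integrable Y P := .of_bound hY.aestronglyMeasurable δ (.of_forall hYδ)
  have hYsq : Integrable (fun ω => Y ω ^ 2) P :=
    .of_bound (hY.pow_const 2).aestronglyMeasurable (δ ^ 2) (.of_forall fun ω => by
      simpa using pow_le_pow_left₀ (abs_nonneg _) (hYδ ω) 2)
  have hYf := integrable_mul_steinSolution_comp z hYint hV
  have hYf' : Integrable (fun ω => Y ω * steinSolution z (V ω + Y ω)) P :=
    integrable_mul_steinSolution_comp z hYint (hV.add hY)
  have hYU : Integrable (fun ω => Y ω ^ 2 * steinMajorant z δ (V ω)) P :=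
    (hVY.symm.comp (measurable_id.pow_const 2) hU).integrable_mul hYsq
      (integrable_steinMajorant_comp hV hVint)
  have hcenter : ∫ ω, Y ω * steinSolution z (V ω) ∂P = 0 := by
    have := hVY.symm.integral_fun_comp_mul_comp (f := fun y => y) hY.aemeasurable hV.aemeasurable
      measurable_id.aestronglyMeasurable hf.aestronglyMeasurable
    rw [this, hY0, zero_mul]
  calc ∫ ω, Y ω * steinSolution z (V ω + Y ω) ∂P
      = ∫ ω, (Y ω * steinSolution z (V ω + Y ω) - Y ω * steinSolution z (V ω)) ∂P := by
        rw [integral_sub hYf' hYf, hcenter, sub_zero]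
    _ ≤ ∫ ω, Y ω ^ 2 * steinMajorant z δ (V ω) ∂P :=
        integral_mono (hYf'.sub hYf) hYU fun ω => by
          rw [← mul_sub]
          exact mul_steinSolution_add_sub_le fun y hy =>
            steinDeriv_le_steinMajorant (hy.trans (hYδ ω))
    _ = (∫ ω, Y ω ^ 2 ∂P) * ∫ ω, steinMajorant z δ (V ω) ∂P :=
        hVY.symm.integral_fun_comp_mul_comp (f := fun y => y ^ 2) hY.aemeasurable
          hV.aemeasurable (measurable_id.pow_const 2).aestronglyMeasurable
          hU.aestronglyMeasurable

variable {ι : Type*} {X : ι → Ω → ℝ}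

lemma integral_sq_finsetSum (hind : iIndepFun X P) (hL2 : ∀ i, MemLp (X i) 2 P)
    (hmean : ∀ i, ∫ ω, X i ω ∂P = 0) (s : Finset ι) :
    ∫ ω, (∑ i ∈ s, X i ω) ^ 2 ∂P = ∑ i ∈ s, ∫ ω, X i ω ^ 2 ∂P := by
  have hsum : MemLp (∑ i ∈ s, X i) 2 P := memLp_finsetSum' s fun i _ => hL2 i
  have hsum0 : ∫ ω, (∑ i ∈ s, X i) ω ∂P = 0 := by
    simp only [Finset.sum_apply]
    rw [integral_finsetSum s fun i _ => (hL2 i).integrable one_le_two]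
    simp [hmean]
  have hvar := IndepFun.variance_sum (s := s) (fun i _ => hL2 i)
    fun i _ j _ hij => hind.indepFun hij
  rw [variance_of_integral_eq_zero hsum.aemeasurable hsum0] at hvar
  simp only [Finset.sum_apply] at hvar
  rw [hvar]
  exact sum_congr rfl fun i _ => variance_of_integral_eq_zero (hL2 i).aemeasurable (hmean i)

lemma integral_abs_le_of_integral_sq_le {W : Ω → ℝ} (hW : MemLp W 2 P) {s : ℝ} (hs : 0 ≤ s)
    (hsq : ∫ ω, W ω ^ 2 ∂P ≤ s ^ 2) : ∫ ω, |W ω| ∂P ≤ s := by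
  have hvar := variance_nonneg |W| P
  rw [variance_eq_sub hW.abs] at hvar
  simp only [Pi.pow_apply, Pi.abs_apply, sq_abs] at hvar
  exact (le_abs_self _).trans (abs_le_of_sq_le_sq (by linarith) hs)

variable [Fintype ι] {δ : ℝ}

lemma stdNormalCDF_le_measureReal_sum_le (hind : iIndepFun X P) (hmeas : ∀ i, Measurable (X i))
    (hmean : ∀ i, ∫ ω, X i ω ∂P = 0) (hδ : 0 ≤ δ) (hbound : ∀ i ω, |X i ω| ≤ δ)
    (hvar : ∑ i, ∫ ω, X i ω ^ 2 ∂P = 1) (z : ℝ) :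
    Φ z ≤ P.real {ω | ∑ i, X i ω ≤ z + 2 * δ} + 8 * δ := by
  classical
  set W : Ω → ℝ := fun ω => ∑ i, X i ω with hW_def
  set V : ι → Ω → ℝ := fun i ω => ∑ j ∈ univ.erase i, X j ω with hV_def
  have hW : Measurable W := Finset.measurable_sum _ fun i _ => hmeas i
  have hV i : Measurable (V i) := Finset.measurable_sum _ fun j _ => hmeas j
  have hVX i ω : V i ω + X i ω = W ω := sum_erase_add _ _ (mem_univ i)
  have hindep i : IndepFun (V i) (X i) P := by
    have := hind.indepFun_finsetSum_of_notMem hmeas (notMem_erase i univ)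
    rwa [show ∑ j ∈ univ.erase i, X j = V i by ext; simp [hV_def]] at this
  have hL2 i : MemLp (X i) 2 P :=
    .of_bound (hmeas i).aestronglyMeasurable δ (.of_forall (hbound i))
  have hVL2 i : MemLp (V i) 2 P := memLp_finsetSum _ fun j _ => hL2 j
  have hV1 i : ∫ ω, |V i ω| ∂P ≤ 1 := by
    refine integral_abs_le_of_integral_sq_le (hVL2 i) zero_le_one ?_
    rw [integral_sq_finsetSum hind hL2 hmean, one_pow, ← hvar]
    exact sum_le_sum_of_subset_of_nonneg (erase_subset _ _) fun j _ _ =>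
      integral_nonneg fun ω => sq_nonneg _
  set B := ∫ ω, W ω * steinSolution z (W ω) ∂P + P.real {ω | W ω ≤ z + 2 * δ} - Φ z + 8 * δ
  suffices h : ∫ ω, W ω * steinSolution z (W ω) ∂P ≤ B by linarith
  calc ∫ ω, W ω * steinSolution z (W ω) ∂P
      = ∑ i, ∫ ω, X i ω * steinSolution z (V i ω + X i ω) ∂P := by
        simp only [hVX, hW_def, sum_mul]
        exact integral_finsetSum _ fun i _ =>
          integrable_mul_steinSolution_comp z ((hL2 i).integrable one_le_two) hW
    _ ≤ ∑ i, (∫ ω, X i ω ^ 2 ∂P) * B := sum_le_sum fun i _ =>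
        (integral_mul_steinSolution_add_le (hindep i) (hV i) (hmeas i)
          ((hVL2 i).integrable one_le_two) (hbound i) (hmean i)).trans <|
        mul_le_mul_of_nonneg_left
          (integral_steinMajorant_le (hV i) hW ((hVL2 i).integrable one_le_two) (hV1 i) hδ
            fun ω => by rw [← hVX i ω, add_sub_cancel_left]; exact hbound i ω)
          (integral_nonneg fun ω => sq_nonneg _)
    _ = B := by rw [← sum_mul, hvar, one_mul]

theorem abs_measureReal_sum_le_sub_stdNormalCDF_le (hind : iIndepFun X P)
    (hmeas : ∀ i, Measurable (X i)) (hmean : ∀ i, ∫ ω, X i ω ∂P = 0) (hδ : 0 < δ)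
    (hbound : ∀ i ω, |X i ω| ≤ δ) (hvar : ∑ i, ∫ ω, X i ω ^ 2 ∂P = 1) (z : ℝ) :
    |P.real {ω | ∑ i, X i ω ≤ z} - Φ z| ≤ 12 * δ := by
  have hlower := stdNormalCDF_le_measureReal_sum_le hind hmeas hmean hδ.le hbound hvar (z - 2 * δ)
  have hupper := stdNormalCDF_le_measureReal_sum_le (X := fun i ω => -X i ω)
    (hind.comp (fun _ x => -x) fun _ => measurable_neg) (fun i => (hmeas i).neg)
    (fun i => by rw [integral_neg, hmean, neg_zero]) hδ.le
    (fun i ω => (abs_neg _).trans_le (hbound i ω)) (by simpa only [neg_sq]) (-(z + 4 * δ))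
  have hdisjoint : P.real {ω | ∑ i, -X i ω ≤ -(z + 4 * δ) + 2 * δ} +
      P.real {ω | ∑ i, X i ω ≤ z} ≤ 1 := by
    rw [← measureReal_union _ (measurableSet_le (by fun_prop) measurable_const)]
    · exact measureReal_le_one
    · refine Set.disjoint_left.mpr fun ω h h' => ?_
      simp only [sum_neg_distrib, Set.mem_ofPred_eq] at h h'
      linarith
  rw [stdNormalCDF_neg] at hupper
  rw [sub_add_cancel] at hlower
  have hshift (t : ℝ) := abs_le.mp (abs_stdNormalCDF_sub_le t z)
  have hΦ := hshift (z - 2 * δ)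
  have hΦ' := hshift (z + 4 * δ)
  rw [show z - 2 * δ - z = -(2 * δ) by ring, abs_neg, abs_of_nonneg (by positivity)] at hΦ
  rw [add_sub_cancel_left, abs_of_nonneg (by positivity)] at hΦ'
  rw [abs_le]
  constructor <;> linarith

end BerryEsseen

section DescentSet

variable {α β : Type*} [LinearOrder α] [LinearOrder β] {n : ℕ}

/-- The descent positions of a word `v : Fin n → α`, the analogue of `descents` for words. -/
def descentSet (v : Fin n → α) : Finset (Fin n) :=
  univ.filter fun i => ∃ h : (i : ℕ) + 1 < n, v ⟨i + 1, h⟩ < v i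

lemma descents_eq_card_descentSet (π : Equiv.Perm (Fin n)) : descents π = #(descentSet π) := rfl

lemma descentSet_strictMono_comp {f : α → β} (hf : StrictMono f) (v : Fin n → α) :
    descentSet (f ∘ v) = descentSet v := by
  simp [descentSet, hf.lt_iff_lt]

lemma card_descentSet_eq_sum (v : Fin (n + 1) → α) :
    (#(descentSet v) : ℝ) = ∑ i : Fin n, if v i.succ < v i.castSucc then 1 else 0 := by
  have hlast : ¬ ∃ h : (Fin.last n : ℕ) + 1 < n + 1, v ⟨Fin.last n + 1, h⟩ < v (Fin.last n) := by
    simp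
  rw [descentSet, card_filter, Fin.sum_univ_castSucc, if_neg hlast, add_zero]
  push_cast
  refine sum_congr rfl fun i _ => if_congr ?_ rfl rfl
  exact ⟨fun ⟨_, h⟩ => h, fun h => ⟨by simp, h⟩⟩

lemma card_descentSet_le_of_eq_off {v w : Fin n → α} {B : Finset (Fin n)}
    (h : ∀ i ∉ B, v i = w i) : #(descentSet v) ≤ #(descentSet w) + 2 * #B := by
  classical
  set predB : Finset (Fin n) := univ.filter fun i => ∃ h : (i : ℕ) + 1 < n, (⟨i + 1, h⟩ : Fin n) ∈ B
  have hcard : #predB ≤ #B := by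
    refine card_le_card_of_forall_subsingleton
      (fun i j : Fin n => (j : ℕ) = i + 1) (fun i hi => ?_) fun j _ i hi k hk => ?_
    · obtain ⟨hlt, hmem⟩ := (mem_filter.mp hi).2
      exact ⟨_, hmem, rfl⟩
    · exact Fin.ext (Nat.succ_injective (hi.2.symm.trans hk.2))
  have hsub : descentSet v ⊆ descentSet w ∪ (B ∪ predB) := fun i hi => by
    obtain ⟨hlt, hdesc⟩ := (mem_filter.mp hi).2
    by_contra hi'
    simp only [mem_union, not_or, predB, descentSet, mem_filter, mem_univ, true_and, not_exists]
      at hi'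
    exact hi'.1 hlt (by rwa [← h _ hi'.2.1, ← h _ (hi'.2.2 hlt)])
  have := (card_le_card hsub).trans (card_union_le _ _)
  have := card_union_le B predB
  omega

lemma expect_card_descentSet_comp {v : Fin n → α} (hv : Function.Injective v) (g : ℕ → ℝ) :
    𝔼 π : Equiv.Perm (Fin n), g #(descentSet (v ∘ π)) =
      𝔼 π : Equiv.Perm (Fin n), g (descents π) := by
  have hsorted : StrictMono (v ∘ Tuple.sort v) :=
    (Tuple.monotone_sort v).strictMono_of_injective (hv.comp (Tuple.sort v).injective)
  refine (Fintype.expect_equiv (Equiv.mulLeft (Tuple.sort v)) _ _ fun π => ?_).symm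
  rw [descents_eq_card_descentSet, ← descentSet_strictMono_comp hsorted]
  rfl

end DescentSet

section IIDWords

lemma integral_comp_eq_of_measurePreserving {Ω Ω' : Type*} [MeasurableSpace Ω]
    [MeasurableSpace Ω'] {P : Measure Ω} {P' : Measure Ω'} {f : Ω → Ω'}
    (hf : MeasurePreserving f P P') {g : Ω' → ℝ} (hg : AEStronglyMeasurable g P') :
    ∫ ω, g (f ω) ∂P = ∫ ω, g ω ∂P' := by
  rw [← hf.map_eq, integral_map hf.aemeasurable (hf.map_eq ▸ hg)]

variable {ι : Type*} [Fintype ι]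

lemma measurePreserving_comp_perm {E : Type*} [MeasurableSpace E] {ν : Measure E} [SigmaFinite ν]
    (π : Equiv.Perm ι) :
    MeasurePreserving (fun v : ι → E => v ∘ π) (Measure.pi fun _ => ν) (Measure.pi fun _ => ν) := by
  convert measurePreserving_piCongrLeft (fun _ : ι => ν) π.symm using 1
  ext v i
  simp [MeasurableEquiv.coe_piCongrLeft, Equiv.piCongrLeft_apply]

variable {n : ℕ} {ν : Measure ℝ} [IsProbabilityMeasure ν]

lemma ae_injective_pi [NullSingletonClass ν] :
    ∀ᵐ v ∂(Measure.pi fun _ : ι => ν), Function.Injective v := by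
  have hne : ∀ i j : ι, i ≠ j → ∀ᵐ v ∂(Measure.pi fun _ : ι => ν), v i ≠ v j := fun i j hij => by
    have hind : IndepFun (fun v : ι → ℝ => v i) (fun v => v j) (Measure.pi fun _ => ν) :=
      (iIndepFun_pi (μ := fun _ : ι => ν) (X := fun _ => id) fun _ => aemeasurable_id).indepFun hij
    have hlaw (k : ι) : (Measure.pi fun _ => ν).map (fun v : ι → ℝ => v k) = ν :=
      (measurePreserving_eval (fun _ => ν) k).map_eq
    have hjoint := (indepFun_iff_map_prod_eq_prod_map_map (measurable_pi_apply i).aemeasurable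
      (measurable_pi_apply j).aemeasurable).mp hind
    rw [hlaw, hlaw] at hjoint
    have hdiag : ∀ᵐ p ∂(ν.prod ν), p.1 ≠ p.2 := by
      refine (Measure.measure_prod_null ?_).mpr (Eventually.of_forall fun x => ?_)
      · simpa [Set.compl_def] using measurableSet_eq_fun measurable_fst measurable_snd
      · simp [Set.preimage, Set.compl_def]
    rw [← hjoint] at hdiag
    exact ae_of_ae_map ((measurable_pi_apply i).prodMk (measurable_pi_apply j)).aemeasurable hdiag
  filter_upwards [ae_all_iff.mpr fun i => ae_all_iff.mpr fun j => ae_all_iff.mpr (hne i j)]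
    with v hv i j using not_imp_not.mp (hv i j)

lemma measurable_card_descentSet : Measurable fun v : Fin n → ℝ => #(descentSet v) := by
  simp only [descentSet, card_filter]
  refine Finset.measurable_sum _ fun i _ => Measurable.ite ?_ measurable_const measurable_const
  by_cases h : (i : ℕ) + 1 < n
  · simpa [h] using measurableSet_lt (f := fun v : Fin n → ℝ => v ⟨i + 1, h⟩)
      (g := fun v => v i) (by fun_prop) (by fun_prop)
  · simp [h]

lemma integrable_comp_card_descentSet (g : ℕ → ℝ) :
    Integrable (fun v : Fin n → ℝ => g #(descentSet v)) (Measure.pi fun _ => ν) := by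
  refine Integrable.of_bound
    ((measurable_from_nat (f := g)).comp measurable_card_descentSet).aestronglyMeasurable
    (∑ k ∈ range (n + 1), |g k|) (Eventually.of_forall fun v => ?_)
  have hle : #(descentSet v) ≤ n := (card_le_univ _).trans_eq (Fintype.card_fin n)
  exact single_le_sum (f := fun k => |g k|) (fun _ _ => abs_nonneg _) (mem_range_succ_iff.mpr hle)

theorem integral_card_descentSet [NullSingletonClass ν] (g : ℕ → ℝ) :
    ∫ v : Fin n → ℝ, g #(descentSet v) ∂(Measure.pi fun _ => ν) =
      𝔼 π : Equiv.Perm (Fin n), g (descents π) := by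
  have hperm : ∀ π : Equiv.Perm (Fin n),
      ∫ v : Fin n → ℝ, g #(descentSet (v ∘ π)) ∂(Measure.pi fun _ => ν) =
        ∫ v : Fin n → ℝ, g #(descentSet v) ∂(Measure.pi fun _ => ν) := fun π =>
    integral_comp_eq_of_measurePreserving (measurePreserving_comp_perm π)
      (integrable_comp_card_descentSet g).aestronglyMeasurable
  have hint (π : Equiv.Perm (Fin n)) :
      Integrable (fun v : Fin n → ℝ => g #(descentSet (v ∘ π))) (Measure.pi fun _ => ν) :=
    (measurePreserving_comp_perm π).integrable_comp_of_integrable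
      (integrable_comp_card_descentSet g)
  calc ∫ v : Fin n → ℝ, g #(descentSet v) ∂(Measure.pi fun _ => ν)
      = 𝔼 π : Equiv.Perm (Fin n),
          ∫ v : Fin n → ℝ, g #(descentSet (v ∘ π)) ∂(Measure.pi fun _ => ν) := by
        simp only [hperm, Fintype.expect_const]
    _ = ∫ v : Fin n → ℝ, 𝔼 π : Equiv.Perm (Fin n), g #(descentSet (v ∘ π))
          ∂(Measure.pi fun _ => ν) := by
        simp only [expect_eq_sum_div_card, integral_div]
        rw [integral_finsetSum _ fun π _ => hint π]
    _ = ∫ _ : Fin n → ℝ, 𝔼 π : Equiv.Perm (Fin n), g (descents π) ∂(Measure.pi fun _ => ν) :=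
        integral_congr_ae <| by
          filter_upwards [ae_injective_pi] with v hv using expect_card_descentSet_comp hv g
    _ = 𝔼 π : Equiv.Perm (Fin n), g (descents π) := by simp

end IIDWords

section CircleWords

/-- The representative in `[0, 1)` of a point of the circle `ℝ / ℤ`. -/
noncomputable def circleRep (a : UnitAddCircle) : ℝ := AddCircle.equivIco 1 0 a

lemma circleRep_mem_Ico (a : UnitAddCircle) : circleRep a ∈ Set.Ico (0 : ℝ) 1 := by
  simpa [circleRep] using (AddCircle.equivIco 1 0 a).2

lemma coe_circleRep (a : UnitAddCircle) : (circleRep a : UnitAddCircle) = a :=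
  AddCircle.coe_equivIco

lemma circleRep_coe {t : ℝ} (ht : t ∈ Set.Ico (0 : ℝ) 1) : circleRep t = t := by
  rw [circleRep, AddCircle.equivIco_coe_of_mem (by simpa using ht)]

lemma circleRep_sub (a b : UnitAddCircle) :
    circleRep (a - b) =
      circleRep a - circleRep b + if circleRep a < circleRep b then 1 else 0 := by
  have ha := circleRep_mem_Ico a
  have hb := circleRep_mem_Ico b
  set k : ℤ := if circleRep a < circleRep b then 1 else 0 with hk
  have hrep : ((circleRep a - circleRep b + k : ℝ) : UnitAddCircle) = a - b := by
    have hint : ((k : ℝ) : UnitAddCircle) = 0 := (AddCircle.coe_eq_zero_iff 1).mpr ⟨k, by simp⟩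
    rw [AddCircle.coe_add, AddCircle.coe_sub, hint, coe_circleRep, coe_circleRep, add_zero]
  have hmem : circleRep a - circleRep b + k ∈ Set.Ico (0 : ℝ) 1 := by
    rw [hk]
    split_ifs <;> constructor <;> push_cast <;> linarith [ha.1, ha.2, hb.1, hb.2]
  rw [← hrep, circleRep_coe hmem, hk]
  push_cast
  rfl

lemma measurable_circleRep : Measurable circleRep :=
  measurable_subtype_coe.comp (AddCircle.measurableEquivIco 1 0).measurable

lemma measurePreserving_circleRep :
    MeasurePreserving circleRep volume (volume.restrict (Set.Ico 0 1)) := by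
  refine ⟨measurable_circleRep, ?_⟩
  have hmk := UnitAddCircle.measurePreserving_mk 0
  rw [zero_add, ← restrict_Ico_eq_restrict_Ioc] at hmk
  rw [← hmk.map_eq, Measure.map_map measurable_circleRep hmk.measurable]
  refine (Measure.map_congr ?_).trans Measure.map_id
  filter_upwards [ae_restrict_mem measurableSet_Ico] with t ht using circleRep_coe ht

/-- The increments `s₀, s₁ - s₀, …, sₘ - sₘ₋₁` of a word on the circle. -/
def circleIncrements (m : ℕ) : (Fin (m + 1) → UnitAddCircle) →+ (Fin (m + 1) → UnitAddCircle) where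
  toFun s := Fin.cons (s 0) fun i => s i.succ - s i.castSucc
  map_zero' := by ext i; cases i using Fin.cases <;> simp
  map_add' s t := by ext i; cases i using Fin.cases <;> simp [add_sub_add_comm]

lemma surjective_circleIncrements (m : ℕ) : Function.Surjective (circleIncrements m) := fun u =>
  ⟨fun i => Fin.partialSum u i.succ, by
    ext i
    cases i using Fin.cases with
    | zero => simp [circleIncrements, Fin.partialSum]
    | succ i =>
      change Fin.partialSum u i.succ.succ - Fin.partialSum u i.castSucc.succ = u i.succ
      rw [Fin.partialSum_succ, Fin.succ_castSucc, add_sub_cancel_left]⟩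

lemma continuous_circleIncrements (m : ℕ) : Continuous (circleIncrements m) :=
  continuous_pi fun i => by
    cases i using Fin.cases with
    | zero => exact continuous_apply 0
    | succ i => exact (continuous_apply i.succ).sub (continuous_apply i.castSucc)

instance isProbabilityMeasure_unitAddCircle :
    IsProbabilityMeasure (volume : Measure UnitAddCircle) :=
  ⟨UnitAddCircle.measure_univ⟩

instance isProbabilityMeasure_restrict_Ico_zero_one :
    IsProbabilityMeasure (volume.restrict (Set.Ico (0 : ℝ) 1)) := ⟨by simp⟩

lemma measurePreserving_circleIncrements (m : ℕ) : MeasurePreserving (circleIncrements m) :=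
  AddMonoidHom.measurePreserving (continuous_circleIncrements m) (surjective_circleIncrements m) rfl

/-- The sum of the representatives of a word on the circle; for a Haar distributed word this is a
sum of `n` independent variables uniform in `[0, 1)`. -/
noncomputable def uniformSum {n : ℕ} (s : Fin n → UnitAddCircle) : ℝ := ∑ i, circleRep (s i)

lemma uniformSum_circleIncrements {m : ℕ} (s : Fin (m + 1) → UnitAddCircle) :
    uniformSum (circleIncrements m s) =
      #(descentSet (circleRep ∘ s)) + circleRep (s (Fin.last m)) := by
  have htelescope := (Fin.sum_univ_succ (circleRep ∘ s)).symm.trans (Fin.sum_univ_castSucc _)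
  simp only [uniformSum, circleIncrements, AddMonoidHom.coe_mk, ZeroHom.coe_mk, Fin.sum_univ_succ,
    Fin.cons_zero, Fin.cons_succ, circleRep_sub, sum_add_distrib, sum_sub_distrib,
    card_descentSet_eq_sum, Function.comp_apply] at htelescope ⊢
  linarith

lemma abs_expect_descents_sub_integral_uniformSum_le {m : ℕ} {F H : ℝ → ℝ}
    (hFH : ∀ d y, |d - y| ≤ 1 → |F d - F y| ≤ H y)
    (hF : Integrable fun s : Fin (m + 1) → UnitAddCircle => F (uniformSum s))
    (hH : Integrable fun s : Fin (m + 1) → UnitAddCircle => H (uniformSum s)) :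
    |𝔼 π : Equiv.Perm (Fin (m + 1)), F (descents π) -
        ∫ s : Fin (m + 1) → UnitAddCircle, F (uniformSum s)| ≤
      ∫ s : Fin (m + 1) → UnitAddCircle, H (uniformSum s) := by
  set D : (Fin (m + 1) → UnitAddCircle) → ℝ := fun s => #(descentSet (circleRep ∘ s))
  set Y : (Fin (m + 1) → UnitAddCircle) → ℝ := fun s => uniformSum (circleIncrements m s)
  have hinc := measurePreserving_circleIncrements m
  have hrep : MeasurePreserving (fun (s : Fin (m + 1) → UnitAddCircle) i => circleRep (s i)) volume
      (Measure.pi fun _ => volume.restrict (Set.Ico 0 1)) :=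
    measurePreserving_pi _ _ fun _ => measurePreserving_circleRep
  have hDint := integrable_comp_card_descentSet (n := m + 1) (ν := volume.restrict (Set.Ico 0 1))
    fun k => F k
  have hFD : Integrable fun s => F (D s) := hrep.integrable_comp_of_integrable hDint
  have hFY : Integrable fun s => F (Y s) := hinc.integrable_comp_of_integrable hF
  have hHY : Integrable fun s => H (Y s) := hinc.integrable_comp_of_integrable hH
  have hDY (s) : |D s - Y s| ≤ 1 := by
    have hlast := circleRep_mem_Ico (s (Fin.last m))
    simp only [D, Y, uniformSum_circleIncrements, sub_add_cancel_left, abs_neg,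
      abs_of_nonneg hlast.1, hlast.2.le]
  have hD : 𝔼 π : Equiv.Perm (Fin (m + 1)), F (descents π) = ∫ s, F (D s) := by
    rw [← integral_card_descentSet (ν := volume.restrict (Set.Ico 0 1)) fun k => F k]
    exact (integral_comp_eq_of_measurePreserving hrep hDint.aestronglyMeasurable).symm
  rw [hD, ← integral_comp_eq_of_measurePreserving hinc hF.aestronglyMeasurable,
    ← integral_comp_eq_of_measurePreserving hinc hH.aestronglyMeasurable, ← integral_sub hFD hFY]
  exact abs_integral_le_integral_abs.trans (integral_mono_of_nonneg
    (.of_forall fun _ => abs_nonneg _) hHY (.of_forall fun s => hFH _ _ (hDY s)))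

end CircleWords

section UniformSum

variable {n : ℕ}

lemma abs_circleRep_sub_half_le (a : UnitAddCircle) : |circleRep a - 1 / 2| ≤ 1 / 2 := by
  have ha := circleRep_mem_Ico a
  exact abs_le.mpr ⟨by linarith [ha.1], by linarith [ha.2]⟩

lemma measurable_uniformSum : Measurable (uniformSum (n := n)) :=
  Finset.measurable_sum _ fun i _ => measurable_circleRep.comp (measurable_pi_apply i)

lemma integral_comp_circleRep_eval {g : ℝ → ℝ} (hg : Continuous g) (i : Fin n) :
    ∫ s : Fin n → UnitAddCircle, g (circleRep (s i)) = ∫ t in (0 : ℝ)..1, g t := by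
  rw [intervalIntegral.integral_of_le zero_le_one, ← restrict_Ico_eq_restrict_Ioc]
  exact integral_comp_eq_of_measurePreserving
    (measurePreserving_circleRep.comp (measurePreserving_eval _ i)) hg.aestronglyMeasurable

lemma integral_circleRep_eval_sub_half (i : Fin n) :
    ∫ s : Fin n → UnitAddCircle, (circleRep (s i) - 1 / 2) = 0 := by
  rw [integral_comp_circleRep_eval (g := fun t => t - 1 / 2) (by fun_prop)]
  norm_num [intervalIntegral.integral_sub, integral_id]

lemma integral_sq_circleRep_eval_sub_half (i : Fin n) :
    ∫ s : Fin n → UnitAddCircle, (circleRep (s i) - 1 / 2) ^ 2 = 1 / 12 := by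
  rw [integral_comp_circleRep_eval (g := fun t => (t - 1 / 2) ^ 2) (by fun_prop)]
  rw [intervalIntegral.integral_comp_sub_right (fun t => t ^ 2)]
  norm_num [integral_pow]

lemma memLp_circleRep_eval_sub_half (i : Fin n) :
    MemLp (fun s : Fin n → UnitAddCircle => circleRep (s i) - 1 / 2) 2 :=
  MemLp.of_bound
    ((measurable_circleRep.comp (measurable_pi_apply i)).sub_const _).aestronglyMeasurable (1 / 2)
    (Eventually.of_forall fun s => abs_circleRep_sub_half_le (s i))

lemma iIndepFun_circleRep_eval_sub_half :
    iIndepFun (fun (i : Fin n) (s : Fin n → UnitAddCircle) => circleRep (s i) - 1 / 2) :=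
  iIndepFun_pi (X := fun _ a => circleRep a - 1 / 2) fun _ =>
    (measurable_circleRep.sub_const _).aemeasurable

lemma uniformSum_sub_eq_sum (s : Fin n → UnitAddCircle) :
    uniformSum s - n / 2 = ∑ i, (circleRep (s i) - 1 / 2) := by
  simp [uniformSum, sum_sub_distrib, div_eq_mul_inv]

lemma memLp_uniformSum_sub :
    MemLp (fun s : Fin n → UnitAddCircle => uniformSum s - n / 2) 2 := by
  simpa only [uniformSum_sub_eq_sum] using
    memLp_finsetSum univ fun i _ => memLp_circleRep_eval_sub_half i

lemma integrable_uniformSum : Integrable (uniformSum (n := n)) := by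
  simpa only [sub_eq_add_neg, integrable_add_const_iff] using
    (memLp_uniformSum_sub (n := n)).integrable one_le_two

lemma integral_uniformSum : ∫ s : Fin n → UnitAddCircle, uniformSum s = n / 2 := by
  have hcentered : ∫ s : Fin n → UnitAddCircle, (uniformSum s - n / 2) = 0 := by
    simp only [uniformSum_sub_eq_sum]
    rw [integral_finsetSum _ fun i _ => (memLp_circleRep_eval_sub_half i).integrable one_le_two]
    exact sum_eq_zero fun i _ => integral_circleRep_eval_sub_half i
  rw [integral_sub integrable_uniformSum (integrable_const _), sub_eq_zero] at hcentered
  simpa using hcentered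

lemma integral_sq_uniformSum_sub :
    ∫ s : Fin n → UnitAddCircle, (uniformSum s - n / 2) ^ 2 = (n : ℝ) / 12 := by
  simp only [uniformSum_sub_eq_sum]
  rw [integral_sq_finsetSum iIndepFun_circleRep_eval_sub_half memLp_circleRep_eval_sub_half
    integral_circleRep_eval_sub_half]
  simp only [integral_sq_circleRep_eval_sub_half, sum_const, card_univ, Fintype.card_fin,
    nsmul_eq_mul, mul_one_div]

lemma integral_abs_uniformSum_sub_le :
    ∫ s : Fin n → UnitAddCircle, |uniformSum s - n / 2| ≤ √(n / 12) :=
  integral_abs_le_of_integral_sq_le memLp_uniformSum_sub (by positivity)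
    (by rw [integral_sq_uniformSum_sub, Real.sq_sqrt (by positivity)])

lemma abs_measureReal_uniformSum_le_sub_stdNormalCDF_le (hn : 0 < n) (y : ℝ) :
    |volume.real {s : Fin n → UnitAddCircle | uniformSum s ≤ y} - Φ ((y - n / 2) / √(n / 12))| ≤
      6 / √(n / 12) := by
  set σ := √((n : ℝ) / 12)
  have hσ : 0 < σ := by positivity
  have hiff (s : Fin n → UnitAddCircle) :
      ∑ i, (circleRep (s i) - 1 / 2) / σ ≤ (y - n / 2) / σ ↔ uniformSum s ≤ y := by
    rw [← sum_div, ← uniformSum_sub_eq_sum, div_le_div_iff_of_pos_right hσ, sub_le_sub_iff_right]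
  have hclt := abs_measureReal_sum_le_sub_stdNormalCDF_le (P := volume) (δ := 1 / (2 * σ))
    (X := fun i (s : Fin n → UnitAddCircle) => (circleRep (s i) - 1 / 2) / σ)
    (iIndepFun_circleRep_eval_sub_half.comp (fun _ t => t / σ) fun _ => measurable_id.div_const σ)
    (fun i => ((measurable_circleRep.comp (measurable_pi_apply i)).sub_const _).div_const σ)
    (fun i => by rw [integral_div, integral_circleRep_eval_sub_half, zero_div]) (by positivity)
    (fun i s => ?_) ?_ ((y - n / 2) / σ)
  · simp only [hiff] at hclt
    exact hclt.trans_eq (by field_simp; norm_num)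
  · rw [abs_div, abs_of_pos hσ, ← div_div]
    gcongr
    exact abs_circleRep_sub_half_le (s i)
  · simp only [div_pow, integral_div, integral_sq_circleRep_eval_sub_half, sum_const, card_univ,
      Fintype.card_fin, nsmul_eq_mul, σ, Real.sq_sqrt (by positivity : (0 : ℝ) ≤ n / 12)]
    field_simp

end UniformSum

section DescentsOfPermutations

lemma abs_sq_sub_sub_sq_sub_le {a b c d : ℝ} (h : |a - b| ≤ d) :
    |(a - c) ^ 2 - (b - c) ^ 2| ≤ 2 * d * |b - c| + d ^ 2 := by
  have : 0 ≤ d := (abs_nonneg _).trans h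
  calc |(a - c) ^ 2 - (b - c) ^ 2| = |2 * ((a - b) * (b - c)) + (a - b) ^ 2| := by ring_nf
    _ ≤ 2 * (|a - b| * |b - c|) + |a - b| ^ 2 := by
      refine (abs_add_le _ _).trans_eq ?_
      rw [abs_mul, abs_mul, abs_two, abs_pow]
    _ ≤ 2 * (d * |b - c|) + d ^ 2 := by gcongr
    _ = 2 * d * |b - c| + d ^ 2 := by ring

/-- The indicator of `(-∞, y]`. -/
noncomputable def indicatorIic (y t : ℝ) : ℝ := if t ≤ y then 1 else 0

lemma abs_indicatorIic_sub_le {a b d y : ℝ} (h : |a - b| ≤ d) :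
    |indicatorIic y a - indicatorIic y b| ≤ indicatorIic (y + d) b - indicatorIic (y - d) b := by
  have hab := abs_le.mp h
  unfold indicatorIic
  split_ifs <;> norm_num <;> linarith

lemma sub_le_of_abs_sub_stdNormalCDF_le {G : ℝ → ℝ} {c σ ε : ℝ} (hσ : 0 < σ)
    (hG : ∀ y, |G y - Φ ((y - c) / σ)| ≤ ε) {d : ℝ} (hd : 0 ≤ d) (y : ℝ) :
    G (y + d) - G (y - d) ≤ 2 * ε + 2 * d / σ := by
  have hlip := (le_abs_self _).trans
    (abs_stdNormalCDF_sub_le ((y + d - c) / σ) ((y - d - c) / σ))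
  have hdist : |(y + d - c) / σ - (y - d - c) / σ| = 2 * d / σ := by
    rw [← sub_div, abs_of_nonneg] <;> ring_nf; positivity
  linarith [(abs_le.mp (hG (y + d))).2, (abs_le.mp (hG (y - d))).1]

variable {n : ℕ}

lemma abs_expect_descents_sub_le (hn : 0 < n) :
    |𝔼 π : Equiv.Perm (Fin n), (descents π : ℝ) - n / 2| ≤ 1 := by
  obtain ⟨m, rfl⟩ := Nat.exists_eq_succ_of_ne_zero hn.ne'
  have h := abs_expect_descents_sub_integral_uniformSum_le (F := fun d => d) (H := fun _ => 1)
    (fun _ _ h => h) (integrable_uniformSum (n := m + 1)) (integrable_const _)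
  simpa only [integral_uniformSum, integral_const, probReal_univ, one_smul] using h

lemma expect_abs_descents_sub_le (hn : 0 < n) :
    𝔼 π : Equiv.Perm (Fin n), |(descents π : ℝ) - n / 2| ≤ √(n / 12) + 1 := by
  obtain ⟨m, rfl⟩ := Nat.exists_eq_succ_of_ne_zero hn.ne'
  have h := abs_expect_descents_sub_integral_uniformSum_le (m := m)
    (F := fun d => |d - (m + 1 : ℕ) / 2|) (H := fun _ => 1)
    (fun a b h => (abs_abs_sub_abs_le_abs_sub _ _).trans (by rwa [sub_sub_sub_cancel_right]))
    (memLp_uniformSum_sub.integrable one_le_two).abs (integrable_const _)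
  simp only [integral_const, probReal_univ, one_smul] at h
  linarith [(abs_le.mp h).2, integral_abs_uniformSum_sub_le (n := m + 1)]

lemma abs_expect_sq_descents_sub_le (hn : 0 < n) :
    |𝔼 π : Equiv.Perm (Fin n), ((descents π : ℝ) - n / 2) ^ 2 - (n : ℝ) / 12| ≤
      2 * √(n / 12) + 1 := by
  obtain ⟨m, rfl⟩ := Nat.exists_eq_succ_of_ne_zero hn.ne'
  have habs := (memLp_uniformSum_sub (n := m + 1)).integrable one_le_two |>.abs
  have h := abs_expect_descents_sub_integral_uniformSum_le
    (F := fun d => (d - (m + 1 : ℕ) / 2) ^ 2) (fun _ _ => abs_sq_sub_sub_sq_sub_le)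
    memLp_uniformSum_sub.integrable_sq ((habs.const_mul _).add (integrable_const _))
  rw [integral_sq_uniformSum_sub, integral_add (habs.const_mul _) (integrable_const _),
    integral_const_mul] at h
  simp only [integral_const, probReal_univ, one_smul] at h
  linarith [integral_abs_uniformSum_sub_le (n := m + 1)]

lemma abs_expect_indicatorIic_descents_sub_le (hn : 0 < n) (y : ℝ) :
    |𝔼 π : Equiv.Perm (Fin n), indicatorIic y (descents π) - Φ ((y - n / 2) / √(n / 12))| ≤
      20 / √(n / 12) := by
  obtain ⟨m, rfl⟩ := Nat.exists_eq_succ_of_ne_zero hn.ne'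
  have hσ : 0 < √(((m + 1 : ℕ) : ℝ) / 12) := by positivity
  have hmeas (t : ℝ) : MeasurableSet {s : Fin (m + 1) → UnitAddCircle | uniformSum s ≤ t} :=
    measurableSet_le measurable_uniformSum measurable_const
  have hint (t : ℝ) :
      Integrable fun s : Fin (m + 1) → UnitAddCircle => indicatorIic t (uniformSum s) :=
    integrable_ite_one_zero (hmeas t)
  have hcdf := abs_measureReal_uniformSum_le_sub_stdNormalCDF_le (n := m + 1) hn
  have h := abs_expect_descents_sub_integral_uniformSum_le
    (fun _ _ => abs_indicatorIic_sub_le (y := y)) (hint y) ((hint (y + 1)).sub (hint (y - 1)))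
  rw [integral_sub (hint _) (hint _)] at h
  simp only [indicatorIic, integral_ite_one_zero (hmeas _)] at h
  have hwindow := sub_le_of_abs_sub_stdNormalCDF_le hσ hcdf zero_le_one y
  calc _ ≤ _ := abs_sub_le _ (volume.real {s : Fin (m + 1) → UnitAddCircle | uniformSum s ≤ y}) _
    _ ≤ (2 * (6 / √((m + 1 : ℕ) / 12)) + 2 * 1 / √((m + 1 : ℕ) / 12)) + 6 / √((m + 1 : ℕ) / 12) :=
      add_le_add (h.trans hwindow) (hcdf y)
    _ = 20 / √((m + 1 : ℕ) / 12) := by ring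

lemma expect_indicatorIic_descents_window_le (hn : 0 < n) {d : ℝ} (hd : 0 ≤ d) (y : ℝ) :
    𝔼 π : Equiv.Perm (Fin n),
        (indicatorIic (y + d) (descents π) - indicatorIic (y - d) (descents π)) ≤
      (40 + 2 * d) / √(n / 12) := by
  rw [expect_sub_distrib]
  refine (sub_le_of_abs_sub_stdNormalCDF_le (by positivity)
    (abs_expect_indicatorIic_descents_sub_le hn) hd y).trans_eq (by ring)

end DescentsOfPermutations

section Derangements

open Equiv (Perm swap)

lemma factorial_le_three_mul_numDerangements {n : ℕ} (hn : 2 ≤ n) :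
    n.factorial ≤ 3 * numDerangements n := by
  induction n using Nat.strong_induction_on with
  | h n ih =>
  match n, hn with
  | 2, _ | 3, _ => decide
  | k + 4, _ =>
    have h2 := ih (k + 2) (by omega) (by omega)
    have h3 := ih (k + 3) (by omega) (by omega)
    have hfact : (k + 4).factorial = (k + 3) * ((k + 2).factorial + (k + 3).factorial) := by
      simp only [Nat.factorial_succ]; ring
    rw [hfact, numDerangements_add_two (k + 2)]
    nlinarith

variable {α : Type*} [Fintype α]

lemma sum_factorial_mul_pow_card_le {r : ℝ} (hr : 0 ≤ r) :
    ∑ A : Finset α, ((Fintype.card α - #A).factorial : ℝ) * r ^ #A ≤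
      (Fintype.card α).factorial * Real.exp r := by
  set N := Fintype.card α
  have hterm (k : ℕ) (hk : k ∈ range (N + 1)) :
      N.choose k • (((N - k).factorial : ℝ) * r ^ k) = N.factorial * (r ^ k / k.factorial) := by
    have hchoose : (N.choose k : ℝ) * k.factorial * (N - k).factorial = N.factorial := by
      exact_mod_cast Nat.choose_mul_factorial_mul_factorial (mem_range_succ_iff.mp hk)
    rw [nsmul_eq_mul, ← hchoose]
    field_simp
  rw [← powerset_univ, sum_powerset_apply_card fun k => ((N - k).factorial : ℝ) * r ^ k,
    card_univ, sum_congr rfl hterm, ← mul_sum]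
  gcongr
  exact Real.sum_le_exp_of_nonneg hr _

variable [DecidableEq α]

/-- The permutations fixing every element of `A`. -/
def fixingPerms (A : Finset α) : Finset (Perm α) := {ρ | ∀ b ∈ A, ρ b = b}

/-- The cheapest modification of `π` into a permutation fixing `a`: exchange the values `π a` and
`a`. -/
def makeFixed (a : α) (π : Perm α) : Perm α := swap a (π a) * π

lemma mem_fixingPerms {A : Finset α} {ρ : Perm α} : ρ ∈ fixingPerms A ↔ ∀ b ∈ A, ρ b = b := by
  simp [fixingPerms]

lemma mem_fixingPerms_insert {A : Finset α} {a : α} {ρ : Perm α} :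
    ρ ∈ fixingPerms (insert a A) ↔ ρ a = a ∧ ρ ∈ fixingPerms A := by
  simp [mem_fixingPerms]

lemma swap_mul_mem_fixingPerms {A : Finset α} {a c : α} (ha : a ∉ A) (hc : c ∉ A) {ρ : Perm α}
    (hρ : ρ ∈ fixingPerms A) : swap a c * ρ ∈ fixingPerms A :=
  mem_fixingPerms.mpr fun b hb => by
    rw [Equiv.Perm.mul_apply, mem_fixingPerms.mp hρ b hb, Equiv.swap_apply_of_ne_of_ne] <;>
      rintro rfl <;> contradiction

lemma apply_notMem_of_mem_fixingPerms {A : Finset α} {a : α} (ha : a ∉ A) {ρ : Perm α}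
    (hρ : ρ ∈ fixingPerms A) : ρ a ∉ A := fun h =>
  ha (ρ.injective (mem_fixingPerms.mp hρ _ h) ▸ h)

lemma sum_makeFixed {A : Finset α} {a : α} (ha : a ∉ A) (G : Perm α → ℝ) :
    ∑ ρ ∈ fixingPerms A, G (makeFixed a ρ) =
      ((Fintype.card α - #A : ℕ) : ℝ) * ∑ ρ ∈ fixingPerms (insert a A), G ρ := by
  have hprod : ((Fintype.card α - #A : ℕ) : ℝ) * ∑ ρ ∈ fixingPerms (insert a A), G ρ =
      ∑ p ∈ fixingPerms (insert a A) ×ˢ Aᶜ, G p.1 := by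
    simp only [sum_product, sum_const, card_compl, nsmul_eq_mul, ← mul_sum]
  rw [hprod]
  refine sum_bij' (fun ρ _ => (makeFixed a ρ, ρ a)) (fun p _ => swap a p.2 * p.1)
    (fun ρ hρ => ?_) (fun p hp => ?_) (fun ρ _ => by simp [makeFixed]) (fun p hp => ?_)
    fun _ _ => rfl
  · have hρa := apply_notMem_of_mem_fixingPerms ha hρ
    exact mem_product.mpr ⟨mem_fixingPerms_insert.mpr
      ⟨by simp [makeFixed], swap_mul_mem_fixingPerms ha hρa hρ⟩, mem_compl.mpr hρa⟩
  · obtain ⟨hfix, hp2⟩ := mem_product.mp hp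
    exact swap_mul_mem_fixingPerms ha (mem_compl.mp hp2) (mem_fixingPerms_insert.mp hfix).2
  · have hpa := (mem_fixingPerms_insert.mp (mem_product.mp hp).1).1
    simp [makeFixed, hpa]

lemma exists_coupling_fixingPerms {D : Perm α → ℝ} {L : ℝ}
    (hD : ∀ a π, |D (makeFixed a π) - D π| ≤ L) (A : Finset α) :
    ∃ T : Perm α → Perm α, (∀ π, |D (T π) - D π| ≤ L * #A) ∧
      ∀ G : Perm α → ℝ,
        ∑ π, G (T π) = (Fintype.card α).descFactorial #A * ∑ ρ ∈ fixingPerms A, G ρ := by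
  induction A using Finset.induction_on with
  | empty => exact ⟨id, by simp, fun G => by simp [fixingPerms]⟩
  | insert a A ha ih =>
    obtain ⟨T, hclose, hsum⟩ := ih
    refine ⟨fun π => makeFixed a (T π), fun π => ?_, fun G => ?_⟩ <;>
      rw [card_insert_of_notMem ha]
    · calc |D (makeFixed a (T π)) - D π| ≤ L + L * #A :=
            (abs_sub_le _ (D (T π)) _).trans (add_le_add (hD a (T π)) (hclose π))
        _ = L * (#A + 1 : ℕ) := by push_cast; ring
    · rw [hsum fun ρ => G (makeFixed a ρ), sum_makeFixed ha, Nat.descFactorial_succ]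
      push_cast
      ring

lemma sum_derangements_eq_sum_fixingPerms (G : Perm α → ℝ) :
    ∑ π : Perm α with ∀ a, π a ≠ a, G π =
      ∑ A : Finset α, (-1 : ℤ) ^ #A • ∑ ρ ∈ fixingPerms A, G ρ := by
  have hfixing (A : Finset α) : fixingPerms A =
      A.inf fun a => ({π : Perm α | π a = a} : Finset (Perm α)) := by
    ext; simp [mem_fixingPerms, mem_inf]
  have hderangements : ({π | ∀ a, π a ≠ a} : Finset (Perm α)) =
      univ.inf fun a : α => ({π : Perm α | π a = a} : Finset (Perm α))ᶜ := by
    ext; simp [mem_inf]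
  simp only [hfixing, hderangements, inclusion_exclusion_sum_inf_compl, powerset_univ]

lemma factorial_le_three_mul_card_derangements (hα : 2 ≤ Fintype.card α) :
    (Fintype.card α).factorial ≤ 3 * #{π : Perm α | ∀ a, π a ≠ a} := by
  refine (factorial_le_three_mul_numDerangements hα).trans_eq ?_
  rw [← card_derangements_eq_numDerangements, ← Fintype.card_subtype]
  exact congrArg _ (Fintype.card_congr (Equiv.refl _))

lemma abs_sum_fixingPerms_sub_expect_le {D : Perm α → ℝ} {L r Q : ℝ}
    (hD : ∀ a π, |D (makeFixed a π) - D π| ≤ L) {F : ℝ → ℝ} {H : ℕ → ℝ → ℝ}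
    (hFH : ∀ j d y, |d - y| ≤ L * (j : ℕ) → |F d - F y| ≤ H j y)
    (hH : ∀ j, 𝔼 π, H j (D π) ≤ r ^ j * Q) (A : Finset α) :
    |∑ ρ ∈ fixingPerms A, (F (D ρ) - 𝔼 π, F (D π))| ≤
      (Fintype.card α - #A).factorial * r ^ #A * Q := by
  obtain ⟨T, hclose, hsum⟩ := exists_coupling_fixingPerms hD A
  set N := Fintype.card α
  set S := ∑ ρ ∈ fixingPerms A, (F (D ρ) - 𝔼 π, F (D π))
  have hfact : ((N - #A).factorial : ℝ) * N.descFactorial #A = N.factorial := by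
    exact_mod_cast Nat.factorial_mul_descFactorial (card_le_univ A)
  have hdesc : (0 : ℝ) < N.descFactorial #A := by
    exact_mod_cast Nat.descFactorial_pos.mpr (card_le_univ A)
  have hcard : (#(univ : Finset (Perm α)) : ℝ) = N.factorial := by
    rw [card_univ, Fintype.card_perm]
  have hcoupled : N.descFactorial #A * S = ∑ π, (F (D (T π)) - F (D π)) := by
    rw [← hsum fun ρ => F (D ρ) - 𝔼 π, F (D π), sum_sub_distrib, sum_sub_distrib, sum_const,
      card_smul_expect]
  have hbound : N.descFactorial #A * |S| ≤ N.factorial * (r ^ #A * Q) := by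
    calc N.descFactorial #A * |S| = |∑ π, (F (D (T π)) - F (D π))| := by
          rw [← hcoupled, abs_mul, abs_of_pos hdesc]
      _ ≤ ∑ π, H #A (D π) :=
          (abs_sum_le_sum_abs _ _).trans (sum_le_sum fun π _ => hFH _ _ _ (hclose π))
      _ = N.factorial * 𝔼 π, H #A (D π) := by
          rw [← hcard, card_mul_expect]
      _ ≤ N.factorial * (r ^ #A * Q) := by gcongr; exact hH _
  refine le_of_mul_le_mul_left (hbound.trans_eq ?_) hdesc
  rw [← hfact]
  ring

theorem abs_expect_derangements_sub_expect_le (hα : 2 ≤ Fintype.card α) {D : Perm α → ℝ}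
    {L r Q : ℝ} (hr : 0 ≤ r) (hD : ∀ a π, |D (makeFixed a π) - D π| ≤ L)
    {F : ℝ → ℝ} {H : ℕ → ℝ → ℝ}
    (hFH : ∀ j d y, |d - y| ≤ L * (j : ℕ) → |F d - F y| ≤ H j y)
    (hH : ∀ j, 𝔼 π, H j (D π) ≤ r ^ j * Q) :
    |𝔼 π : Perm α with ∀ a, π a ≠ a, F (D π) - 𝔼 π, F (D π)| ≤ 3 * Real.exp r * Q := by
  have hQ : 0 ≤ Q := by
    simpa using (expect_nonneg fun π _ => (abs_nonneg _).trans (hFH 0 (D π) (D π) (by simp))).trans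
      (hH 0)
  set N := Fintype.card α
  set derangementCount := #{π : Perm α | ∀ a, π a ≠ a} with hcount
  have hlower : (N.factorial : ℝ) ≤ 3 * derangementCount := by
    exact_mod_cast factorial_le_three_mul_card_derangements hα
  have hpos : (0 : ℝ) < derangementCount := by
    have : (0 : ℝ) < N.factorial := by positivity
    linarith
  have hcentered : 𝔼 π : Perm α with ∀ a, π a ≠ a, F (D π) - 𝔼 π, F (D π) =
      (∑ π : Perm α with ∀ a, π a ≠ a, (F (D π) - 𝔼 ρ, F (D ρ))) / derangementCount := by
    rw [sum_sub_distrib, sum_const, nsmul_eq_mul, expect_eq_sum_div_card, ← hcount]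
    field_simp
  rw [hcentered, abs_div, abs_of_pos hpos, div_le_iff₀ hpos, sum_derangements_eq_sum_fixingPerms]
  calc _ ≤ ∑ A : Finset α, |∑ ρ ∈ fixingPerms A, (F (D ρ) - 𝔼 π, F (D π))| := by
        refine (abs_sum_le_sum_abs _ _).trans_eq (sum_congr rfl fun A _ => ?_)
        rw [zsmul_eq_mul, abs_mul]
        simp
    _ ≤ ∑ A : Finset α, (N - #A).factorial * r ^ #A * Q :=
        sum_le_sum fun A _ => abs_sum_fixingPerms_sub_expect_le hD hFH hH A
    _ ≤ N.factorial * Real.exp r * Q := by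
        rw [← sum_mul]
        gcongr
        exact sum_factorial_mul_pow_card_le hr
    _ ≤ 3 * derangementCount * Real.exp r * Q := by gcongr
    _ = 3 * Real.exp r * Q * derangementCount := by ring

end Derangements

section DescentsOfDerangements

open Equiv (Perm)

variable {n : ℕ}

lemma makeFixed_apply_of_notMem {α : Type*} [DecidableEq α] {a i : α} {π : Perm α}
    (hi : i ∉ ({a, π.symm a} : Finset α)) : makeFixed a π i = π i := by
  simp only [mem_insert, mem_singleton, not_or] at hi
  exact Equiv.swap_apply_of_ne_of_ne (fun h => hi.2 (by rw [← h, Equiv.symm_apply_apply]))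
    (π.injective.ne hi.1)

lemma abs_descents_makeFixed_sub_le (a : Fin n) (π : Perm (Fin n)) :
    |(descents (makeFixed a π) : ℝ) - descents π| ≤ 4 := by
  have hcard : #({a, π.symm a} : Finset (Fin n)) ≤ 2 := card_le_two
  have hoff : ∀ i ∉ ({a, π.symm a} : Finset (Fin n)), makeFixed a π i = π i :=
    fun i => makeFixed_apply_of_notMem
  have hle := card_descentSet_le_of_eq_off hoff
  have hge := card_descentSet_le_of_eq_off fun i hi => (hoff i hi).symm
  simp only [← descents_eq_card_descentSet] at hle hge
  have hle' : (descents (makeFixed a π) : ℝ) ≤ descents π + 4 := by exact_mod_cast (by omega)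
  have hge' : (descents π : ℝ) ≤ descents (makeFixed a π) + 4 := by exact_mod_cast (by omega)
  exact abs_le.mpr ⟨by linarith, by linarith⟩

lemma mem_derangementSet {π : Perm (Fin n)} : π ∈ derangementSet n ↔ ∀ i, π i ≠ i := by
  simp [derangementSet]

lemma abs_expect_derangementSet_sub_expect_le (hn : 2 ≤ n) {F : ℝ → ℝ} {H : ℕ → ℝ → ℝ} {Q : ℝ}
    (hFH : ∀ (j : ℕ) (d y : ℝ), |d - y| ≤ 4 * j → |F d - F y| ≤ H j y)
    (hH : ∀ j, 𝔼 π : Perm (Fin n), H j (descents π) ≤ 4 ^ j * Q) :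
    |𝔼 π ∈ derangementSet n, F (descents π) - 𝔼 π : Perm (Fin n), F (descents π)| ≤
      3 * Real.exp 4 * Q := by
  have hcard : 2 ≤ Fintype.card (Fin n) := by rwa [Fintype.card_fin]
  have hle := abs_expect_derangements_sub_expect_le hcard (D := fun π => (descents π : ℝ))
    (by norm_num) abs_descents_makeFixed_sub_le hFH hH
  simpa only [← mem_derangementSet, filter_univ_mem] using hle

lemma one_add_sq_le_four_pow (j : ℕ) : (1 + j : ℝ) ^ 2 ≤ 4 ^ j := by
  have hbernoulli : (1 + j : ℝ) ≤ 2 ^ j := by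
    have := one_add_mul_le_pow (a := (1 : ℝ)) (by norm_num) j
    norm_num at this
    linarith
  calc (1 + j : ℝ) ^ 2 ≤ (2 ^ j) ^ 2 := by gcongr
    _ = 4 ^ j := by rw [pow_right_comm]; norm_num

lemma abs_expect_derangementSet_descents_sub_le (hn : 2 ≤ n) :
    |𝔼 π ∈ derangementSet n, (descents π : ℝ) - n / 2| ≤ 3 * Real.exp 4 + 1 := by
  have htransfer := abs_expect_derangementSet_sub_expect_le hn (F := fun d => d)
    (H := fun j _ => 4 * j) (Q := 1) (fun _ _ _ h => h) fun j => by
      rw [Fintype.expect_const]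
      nlinarith [one_add_sq_le_four_pow j, sq_nonneg (1 - j : ℝ)]
  linarith [abs_sub_le (𝔼 π ∈ derangementSet n, (descents π : ℝ))
    (𝔼 π : Perm (Fin n), (descents π : ℝ)) (n / 2), abs_expect_descents_sub_le (by omega : 0 < n)]

lemma abs_expect_derangementSet_sq_descents_sub_le (hn : 2 ≤ n) :
    |𝔼 π ∈ derangementSet n, ((descents π : ℝ) - n / 2) ^ 2 - (n : ℝ) / 12| ≤
      3 * Real.exp 4 * (2 * √(n / 12) + 18) + (2 * √(n / 12) + 1) := by
  have hpos : 0 < n := by omega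
  set σ := √((n : ℝ) / 12)
  have hσ : 0 ≤ σ := Real.sqrt_nonneg _
  have htransfer := abs_expect_derangementSet_sub_expect_le hn (Q := 2 * σ + 18)
    (F := fun d => (d - n / 2) ^ 2)
    (fun j _ _ => abs_sq_sub_sub_sq_sub_le) fun j => by
      rw [expect_add_distrib, Fintype.expect_const, ← mul_expect]
      calc _ ≤ 2 * (4 * j) * (σ + 1) + (4 * (j : ℝ)) ^ 2 := by
            gcongr; exact expect_abs_descents_sub_le hpos
        _ ≤ (1 + j) ^ 2 * (2 * σ + 18) := by
            nlinarith [mul_nonneg hσ (sq_nonneg (1 - j : ℝ)), sq_nonneg (1 - j : ℝ)]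
        _ ≤ 4 ^ j * (2 * σ + 18) := by gcongr; exact one_add_sq_le_four_pow j
  linarith [abs_sub_le (𝔼 π ∈ derangementSet n, ((descents π : ℝ) - n / 2) ^ 2)
    (𝔼 π : Perm (Fin n), ((descents π : ℝ) - n / 2) ^ 2) ((n : ℝ) / 12),
    abs_expect_sq_descents_sub_le hpos]

lemma abs_expect_derangementSet_indicatorIic_sub_le (hn : 2 ≤ n) (y : ℝ) :
    |𝔼 π ∈ derangementSet n, indicatorIic y (descents π) - Φ ((y - n / 2) / √(n / 12))| ≤
      (120 * Real.exp 4 + 20) / √(n / 12) := by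
  have hpos : 0 < n := by omega
  set σ := √((n : ℝ) / 12)
  have : 0 < σ := by positivity
  have htransfer := abs_expect_derangementSet_sub_expect_le hn (Q := 40 / σ)
    (fun j _ _ => abs_indicatorIic_sub_le (y := y)) fun j => by
      calc _ ≤ (40 + 2 * (4 * j)) / σ :=
            expect_indicatorIic_descents_window_le hpos (by positivity) y
        _ ≤ (40 * (1 + j : ℝ) ^ 2) / σ := by gcongr; nlinarith [Nat.cast_nonneg (α := ℝ) j]
        _ ≤ (40 * 4 ^ j) / σ := by gcongr; exact one_add_sq_le_four_pow j
        _ = 4 ^ j * (40 / σ) := by ring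
  calc _ ≤ _ := abs_sub_le _ (𝔼 π : Perm (Fin n), indicatorIic y (descents π)) _
    _ ≤ 3 * Real.exp 4 * (40 / σ) + 20 / σ :=
      add_le_add htransfer (abs_expect_indicatorIic_descents_sub_le hpos y)
    _ = (120 * Real.exp 4 + 20) / σ := by ring

lemma derMean_eq_expect (n : ℕ) : derMean n = 𝔼 π ∈ derangementSet n, (descents π : ℝ) :=
  (expect_eq_sum_div_card _ _).symm

lemma derVar_eq_expect (n : ℕ) :
    derVar n = 𝔼 π ∈ derangementSet n, ((descents π : ℝ) - derMean n) ^ 2 :=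
  (expect_eq_sum_div_card _ _).symm

lemma derCDF_eq_expect (n : ℕ) (x : ℝ) : derCDF n x =
    𝔼 π ∈ derangementSet n, indicatorIic x (((descents π : ℝ) - derMean n) / √(derVar n)) := by
  simp only [derCDF, expect_eq_sum_div_card, indicatorIic, sum_boole]

lemma derangementSet_nonempty (hn : 2 ≤ n) : (derangementSet n).Nonempty := by
  have hcard := factorial_le_three_mul_card_derangements (α := Fin n) (by rwa [Fintype.card_fin])
  simp only [← mem_derangementSet, filter_univ_mem] at hcard
  have hfact := (Fintype.card (Fin n)).factorial_pos
  exact card_pos.mp (by omega)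

lemma derVar_eq_expect_sq_sub (hn : 2 ≤ n) (c : ℝ) :
    derVar n = 𝔼 π ∈ derangementSet n, ((descents π : ℝ) - c) ^ 2 - (derMean n - c) ^ 2 := by
  have hexpand : ∀ π : Perm (Fin n), ((descents π : ℝ) - derMean n) ^ 2 =
      (descents π - c) ^ 2 - 2 * (derMean n - c) * descents π +
        (derMean n - c) * (derMean n + c) := fun π => by ring
  simp only [derVar_eq_expect, hexpand, expect_add_distrib, expect_sub_distrib, ← mul_expect,
    expect_const (derangementSet_nonempty hn), ← derMean_eq_expect]
  ring

/-- A constant `V` for which `|Var R_n - n / 12| ≤ V * √(n / 12)` once `n ≥ 3`. -/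
noncomputable def varianceErrorConst : ℝ :=
  38 * (3 * Real.exp 4) + 4 + 2 * (3 * Real.exp 4 + 1) ^ 2

lemma abs_derMean_sub_le (hn : 2 ≤ n) : |derMean n - n / 2| ≤ 3 * Real.exp 4 + 1 :=
  derMean_eq_expect n ▸ abs_expect_derangementSet_descents_sub_le hn

lemma abs_derVar_sub_le (hn : 3 ≤ n) :
    |derVar n - n / 12| ≤ varianceErrorConst * √(n / 12) := by
  have hn' : 2 ≤ n := by omega
  have hsq : (derMean n - n / 2) ^ 2 ≤ (3 * Real.exp 4 + 1) ^ 2 :=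
    sq_le_sq' (abs_le.mp (abs_derMean_sub_le hn')).1 (abs_le.mp (abs_derMean_sub_le hn')).2
  have hσ : 1 / 2 ≤ √((n : ℝ) / 12) := by
    have : (3 : ℝ) ≤ n := by exact_mod_cast hn
    exact Real.le_sqrt_of_sq_le (by linarith)
  have hmoment := abs_le.mp (abs_expect_derangementSet_sq_descents_sub_le hn')
  rw [derVar_eq_expect_sq_sub hn' (n / 2), abs_le, varianceErrorConst]
  constructor <;> nlinarith [Real.exp_pos 4, sq_nonneg (derMean n - n / 2),
    mul_nonneg (Real.exp_pos 4).le (sub_nonneg.mpr hσ),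
    mul_nonneg (sq_nonneg (3 * Real.exp 4 + 1)) (sub_nonneg.mpr hσ)]

lemma abs_div_sub_one_le {s σ V : ℝ} (hσ : 0 < σ) (hs : 0 ≤ s) (h : |s ^ 2 - σ ^ 2| ≤ V * σ) :
    |s / σ - 1| ≤ V / σ := by
  have hfactor : |s ^ 2 - σ ^ 2| = |s - σ| * (s + σ) := by
    rw [← abs_of_nonneg (by positivity : 0 ≤ s + σ), ← abs_mul]
    ring_nf
  have hle : |s - σ| ≤ V := le_of_mul_le_mul_right
    (by nlinarith [mul_nonneg (abs_nonneg (s - σ)) hs]) hσ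
  rw [div_sub_one hσ.ne', abs_div, abs_of_pos hσ]
  gcongr

lemma abs_sub_stdNormalCDF_le_of_rescale {G : ℝ → ℝ} {c m s σ ε M V : ℝ} (hσ : 0 < σ) (hs : 0 ≤ s)
    (hG : ∀ y, |G y - Φ ((y - c) / σ)| ≤ ε) (hm : |m - c| ≤ M)
    (hvar : |s ^ 2 - σ ^ 2| ≤ V * σ) (x : ℝ) :
    |G (m + s * x) - Φ x| ≤ ε + (M + 2 * V) / σ := by
  have hshift : |Φ ((m + s * x - c) / σ) - Φ (s / σ * x)| ≤ M / σ := by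
    refine (abs_stdNormalCDF_sub_le _ _).trans ?_
    rw [show (m + s * x - c) / σ - s / σ * x = (m - c) / σ by ring, abs_div, abs_of_pos hσ]
    gcongr
  have hscale : |Φ (s / σ * x) - Φ x| ≤ 2 * (V / σ) :=
    (abs_stdNormalCDF_mul_sub_le _ _).trans (by gcongr; exact abs_div_sub_one_le hσ hs hvar)
  calc _ ≤ |G (m + s * x) - Φ ((m + s * x - c) / σ)| +
          |Φ ((m + s * x - c) / σ) - Φ (s / σ * x)| + |Φ (s / σ * x) - Φ x| :=
        (abs_sub_le _ (Φ (s / σ * x)) _).trans (by gcongr; exact abs_sub_le _ _ _)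
    _ ≤ ε + M / σ + 2 * (V / σ) := by gcongr; exact hG _
    _ = ε + (M + 2 * V) / σ := by ring

lemma derCDF_eq_of_derVar_pos (hvar : 0 < derVar n) (x : ℝ) :
    derCDF n x =
      𝔼 π ∈ derangementSet n, indicatorIic (derMean n + √(derVar n) * x) (descents π) := by
  have hsqrt : 0 < √(derVar n) := Real.sqrt_pos.mpr hvar
  simp only [derCDF_eq_expect, indicatorIic, div_le_iff₀ hsqrt, sub_le_iff_le_add', mul_comm x]

lemma derCDF_nonneg (n : ℕ) (x : ℝ) : 0 ≤ derCDF n x := by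
  unfold derCDF
  positivity

lemma derCDF_le_one (n : ℕ) (x : ℝ) : derCDF n x ≤ 1 :=
  div_le_one_of_le₀ (by exact_mod_cast card_filter_le _ _) (Nat.cast_nonneg _)

lemma abs_derCDF_sub_stdNormalCDF_le_one (n : ℕ) (x : ℝ) : |derCDF n x - Φ x| ≤ 1 :=
  abs_le.mpr ⟨by linarith [derCDF_nonneg n x, stdNormalCDF_le_one x],
    by linarith [derCDF_le_one n x, stdNormalCDF_nonneg x]⟩

/-- A constant `C` for which the normal approximation error of `R_n` is at most `C / √(n / 12)`. -/
noncomputable def descentsErrorConst : ℝ :=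
  120 * Real.exp 4 + 20 + (3 * Real.exp 4 + 1 + 2 * varianceErrorConst)

lemma abs_derCDF_sub_stdNormalCDF_le_of_derVar_pos (hn : 3 ≤ n) (hvar : 0 < derVar n) (x : ℝ) :
    |derCDF n x - Φ x| ≤ descentsErrorConst / √(n / 12) := by
  have hn' : 2 ≤ n := by omega
  have hσ : 0 < √((n : ℝ) / 12) := by positivity
  have hvariance : |√(derVar n) ^ 2 - √((n : ℝ) / 12) ^ 2| ≤ varianceErrorConst * √(n / 12) := by
    rw [Real.sq_sqrt hvar.le, Real.sq_sqrt (by positivity)]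
    exact abs_derVar_sub_le hn
  rw [derCDF_eq_of_derVar_pos hvar, descentsErrorConst, add_div]
  exact abs_sub_stdNormalCDF_le_of_rescale hσ (Real.sqrt_nonneg _)
    (abs_expect_derangementSet_indicatorIic_sub_le hn') (abs_derMean_sub_le hn') hvariance x

lemma derVar_pos_of_varianceErrorConst_lt (hn : 3 ≤ n) (hlarge : varianceErrorConst < √(n / 12)) :
    0 < derVar n := by
  have hsq : √((n : ℝ) / 12) ^ 2 = n / 12 := Real.sq_sqrt (by positivity)
  have hσ : 0 < √((n : ℝ) / 12) := by positivity
  nlinarith [(abs_le.mp (abs_derVar_sub_le hn)).1]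

lemma abs_derCDF_sub_stdNormalCDF_le (hn : 3 ≤ n) (x : ℝ) :
    |derCDF n x - Φ x| ≤ descentsErrorConst / √(n / 12) := by
  rcases lt_or_ge varianceErrorConst √(n / 12) with hlarge | hsmall
  · exact abs_derCDF_sub_stdNormalCDF_le_of_derVar_pos hn
      (derVar_pos_of_varianceErrorConst_lt hn hlarge) x
  · have hσ : 0 < √((n : ℝ) / 12) := by positivity
    refine (abs_derCDF_sub_stdNormalCDF_le_one n x).trans ((one_le_div hσ).mpr ?_)
    rw [descentsErrorConst]
    linarith [Real.exp_pos 4]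

end DescentsOfDerangements

theorem descents_derangements_clt_rate_general :
    ∃ C : ℝ, 0 < C ∧ ∀ n : ℕ, 4 ≤ n → ∀ x : ℝ, |derCDF n x - stdNormalCDF x| ≤ C / √n := by
  refine ⟨descentsErrorConst * √12, by unfold descentsErrorConst varianceErrorConst; positivity,
    fun n hn x => (abs_derCDF_sub_stdNormalCDF_le (by omega) x).trans_eq ?_⟩
  rw [Real.sqrt_div (Nat.cast_nonneg n), div_div_eq_mul_div]

/-- Rate of convergence `O(n^{-1/3})` for the number of descents in random derangements. -/
theorem descents_derangements_clt_rate :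
    ∃ C : ℝ, 0 < C ∧ ∀ n : ℕ, 4 ≤ n → ∀ x : ℝ,
      |derCDF n x - stdNormalCDF x| ≤ C / (n : ℝ) ^ ((1 : ℝ) / 3) := by
  obtain ⟨C, hC, hrate⟩ := descents_derangements_clt_rate_general
  refine ⟨C, hC, fun n hn x => (hrate n hn x).trans ?_⟩
  have hn_pos : (1 : ℝ) ≤ n := by exact_mod_cast (by omega : 1 ≤ n)
  rw [Real.sqrt_eq_rpow]
  gcongr
  norm_num
end

section
/- For every integer n ≥ 1, Σ_{(a_1,…,a_m) ∈ C_{≤2}(n)} Π_{i : a_i = 2} (1 + a_1 + ⋯ + a_{i−1}) = i_n, where the sum is over all compositions of n with parts in {1,2}, the product is over the indices i whose part a_i equals 2 (an empty product equals 1), and i_n is the number of involutions in the symmetric group S_n. -/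
open Finset

/-- The involutions of the symmetric group `S_n`. -/
def involutions (n : ℕ) : Finset (Equiv.Perm (Fin n)) :=
  Finset.univ.filter fun π => π * π = 1

/-- The compositions of `n` all of whose parts are `1` or `2`. -/
def compsLe2 (n : ℕ) : Finset (Composition n) :=
  Finset.univ.filter fun c => ∀ a ∈ c.blocks, a = 1 ∨ a = 2

/-! Both sides satisfy `u (n + 2) = u (n + 1) + (n + 1) * u n` with `u 0 = u 1 = 1`. For the
compositions, remove the last part: a final `2` is preceded by parts of total `n`, hence contributes
the factor `1 + n`. For the involutions, look at the image `b` of the point `0`: multiplying by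
`swap 0 b` identifies the involutions with `π 0 = b` with the involutions fixing `0` and `b`, which
are the involutions of the remaining `n + 1` points if `b = 0`, and of `n` points otherwise. -/

section Compositions

/-- The product of the weights `f s a` over the entries `a` of `l`, where `s` is the sum of the
entries preceding `a`. The summand of the theorem is the case where `f s a` is `1 + s` for `a = 2`
and `1` otherwise. The default value `0` of `getD` is never reached. -/
def partialSumProd {M : Type*} [CommMonoid M] (f : ℕ → ℕ → M) (l : List ℕ) : M :=
  ∏ i ∈ range l.length, f (l.take i).sum (l.getD i 0)

lemma partialSumProd_append_singleton {M : Type*} [CommMonoid M] (f : ℕ → ℕ → M) (l : List ℕ)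
    (a : ℕ) : partialSumProd f (l ++ [a]) = partialSumProd f l * f l.sum a := by
  have factor_eq : ∀ i ∈ range l.length,
      f ((l ++ [a]).take i).sum ((l ++ [a]).getD i 0) = f (l.take i).sum (l.getD i 0) := by
    intro i hi
    have hi : i < l.length := mem_range.1 hi
    rw [List.getD_append _ _ _ _ hi, List.take_append_of_le_length hi.le]
  rw [partialSumProd, List.length_append, List.length_singleton, prod_range_succ,
    prod_congr rfl factor_eq]
  simp [partialSumProd]

variable {n : ℕ}

lemma append_single_mem_compsLe2_iff {c : Composition n} {k : ℕ} (hk : 0 < k) :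
    c.append (.single k hk) ∈ compsLe2 (n + k) ↔ c ∈ compsLe2 n ∧ (k = 1 ∨ k = 2) := by
  simp [compsLe2, or_imp, forall_and]

lemma append_single_injective {k : ℕ} (hk : 0 < k) :
    Function.Injective fun c : Composition n => c.append (.single k hk) := fun _ _ h =>
  Composition.ext <| List.append_cancel_right (congrArg Composition.blocks h)

lemma exists_append_single_eq {k : ℕ} (hk : 0 < k) {c : Composition (n + k)} {l : List ℕ}
    (hc : c.blocks = l ++ [k]) : ∃ d : Composition n, d.append (.single k hk) = c := by
  have sum_l : l.sum = n := by simpa [hc] using c.blocks_sum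
  exact ⟨⟨l, fun ha => c.blocks_pos (by simp [hc, ha]), sum_l⟩, Composition.ext hc.symm⟩

lemma exists_append_single_eq_of_mem_compsLe2 {c : Composition (n + 2)}
    (hc : c ∈ compsLe2 (n + 2)) :
    (∃ d : Composition (n + 1), d.append (.single 1 one_pos) = c) ∨
      ∃ d : Composition n, d.append (.single 2 two_pos) = c := by
  obtain hnil | ⟨l, a, hla⟩ := c.blocks.eq_nil_or_concat'
  · simpa [hnil] using c.blocks_sum
  · have ha : a = 1 ∨ a = 2 := (mem_filter.1 hc).2 a (by simp [hla])
    rcases ha with rfl | rfl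
    · exact .inl (exists_append_single_eq one_pos hla)
    · exact .inr (exists_append_single_eq two_pos hla)

lemma append_single_one_ne_append_single_two (c : Composition (n + 1)) (d : Composition n) :
    c.append (.single 1 one_pos) ≠ d.append (.single 2 two_pos) := fun h => by
  have last_eq : [1] = [2] := List.append_inj_right' (congrArg Composition.blocks h) rfl
  simp at last_eq

/-- Appends a final part `1` to a composition of `n + 1` and a final part `2` to a composition of
`n`. Its inverse, removing the last part, splits `compsLe2 (n + 2)` in the recurrence. -/
def appendOneOrTwo : Composition (n + 1) ⊕ Composition n → Composition (n + 2) :=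
  Sum.elim (·.append (.single 1 one_pos)) (·.append (.single 2 two_pos))

lemma appendOneOrTwo_injective :
    Function.Injective (appendOneOrTwo : Composition (n + 1) ⊕ Composition n → _) :=
  (append_single_injective one_pos).sumElim (append_single_injective two_pos)
    append_single_one_ne_append_single_two

lemma compsLe2_add_two (n : ℕ) :
    compsLe2 (n + 2) = ((compsLe2 (n + 1)).disjSum (compsLe2 n)).image appendOneOrTwo := by
  ext c
  simp only [mem_image, Sum.exists, inl_mem_disjSum, inr_mem_disjSum]
  constructor
  · intro hc
    rcases exists_append_single_eq_of_mem_compsLe2 hc with ⟨d, rfl⟩ | ⟨d, rfl⟩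
    · exact .inl ⟨d, ((append_single_mem_compsLe2_iff one_pos).1 hc).1, rfl⟩
    · exact .inr ⟨d, ((append_single_mem_compsLe2_iff two_pos).1 hc).1, rfl⟩
  · rintro (⟨d, hd, rfl⟩ | ⟨d, hd, rfl⟩)
    · exact (append_single_mem_compsLe2_iff one_pos).2 ⟨hd, .inl rfl⟩
    · exact (append_single_mem_compsLe2_iff two_pos).2 ⟨hd, .inr rfl⟩

lemma compsLe2_eq_singleton_ones (hn : n ≤ 1) : compsLe2 n = {Composition.ones n} := by
  refine eq_singleton_iff_unique_mem.2 ⟨by simp [compsLe2], fun c _ => ?_⟩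
  exact Composition.eq_ones_iff.2 fun a ha =>
    le_antisymm ((c.blocks_le ha).trans hn) (c.one_le_blocks ha)

lemma sum_compsLe2_add_two {R : Type*} [CommSemiring R] (f : ℕ → ℕ → R) (n : ℕ) :
    ∑ c ∈ compsLe2 (n + 2), partialSumProd f c.blocks =
      (∑ c ∈ compsLe2 (n + 1), partialSumProd f c.blocks) * f (n + 1) 1 +
        (∑ c ∈ compsLe2 n, partialSumProd f c.blocks) * f n 2 := by
  rw [compsLe2_add_two, sum_image appendOneOrTwo_injective.injOn, sum_disjSum, sum_mul, sum_mul]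
  simp only [appendOneOrTwo, Sum.elim_inl, Sum.elim_inr, Composition.append_blocks,
    Composition.single_blocks, partialSumProd_append_singleton, Composition.blocks_sum]

end Compositions

section Involutions

lemma mul_mul_self_eq_one_iff_of_commute {M : Type*} [Monoid M] {g h : M} (hgh : Commute g h)
    (hg : g * g = 1) : g * h * (g * h) = 1 ↔ h * h = 1 := by
  rw [hgh.symm.mul_mul_mul_comm, hg, one_mul]

open Equiv

variable {α : Type*} [DecidableEq α]

lemma swap_mul_mul_self_eq_one_iff {π : Perm α} {a b : α} (hab : π a = b) (hba : π b = a) :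
    swap a b * π * (swap a b * π) = 1 ↔ π * π = 1 := by
  have commute_swap : Commute (swap a b) π := by
    rw [Commute, SemiconjBy, mul_swap_eq_swap_mul, hab, hba, swap_comm]
  exact mul_mul_self_eq_one_iff_of_commute commute_swap (swap_mul_self a b)

lemma mul_self_eq_one_and_apply_eq_iff {π : Perm α} {a b : α} :
    π * π = 1 ∧ π a = b ↔
      swap a b * π * (swap a b * π) = 1 ∧ ∀ x ∈ ({a, b} : Finset α), (swap a b * π) x = x := by
  have fixes_iff : (∀ x ∈ ({a, b} : Finset α), (swap a b * π) x = x) ↔ π a = b ∧ π b = a := by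
    simp [swap_apply_eq_iff]
  rw [fixes_iff]
  constructor
  · rintro ⟨hπ, hab⟩
    have hba : π b = a := by rw [← hab, ← Perm.mul_apply, hπ, Perm.one_apply]
    exact ⟨(swap_mul_mul_self_eq_one_iff hab hba).2 hπ, hab, hba⟩
  · rintro ⟨hσ, hab, hba⟩
    exact ⟨(swap_mul_mul_self_eq_one_iff hab hba).1 hσ, hab⟩

variable [Fintype α]

lemma card_mul_self_eq_one :
    #{π : Perm α | π * π = 1} = #(involutions (Fintype.card α)) := by
  let e : Perm α ≃* Perm (Fin (Fintype.card α)) := (Fintype.equivFin α).permCongrHom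
  refine card_equiv e.toEquiv fun π => ?_
  simp [involutions, ← map_mul]

lemma card_mul_self_eq_one_and_fixes (s : Finset α) :
    #{π : Perm α | π * π = 1 ∧ ∀ x ∈ s, π x = x} = #(involutions (Fintype.card α - #s)) := by
  have card_compl : Fintype.card {x // x ∉ s} = Fintype.card α - #s := by simp
  rw [← card_compl, ← card_mul_self_eq_one, eq_comm]
  refine card_nbij Perm.ofSubtype (fun σ hσ => ?_) Perm.ofSubtype_injective.injOn fun π hπ => ?_
  · have hσ : σ * σ = 1 := by simpa using hσ
    have fixes (x : α) (hx : x ∈ s) : Perm.ofSubtype σ x = x :=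
      Perm.ofSubtype_apply_of_not_mem σ (not_not.2 hx)
    simpa [← map_mul, hσ] using fixes
  · obtain ⟨hπ, fixes⟩ : π * π = 1 ∧ ∀ x ∈ s, π x = x := by simpa using hπ
    obtain ⟨σ, hσ⟩ := (Perm.subtypeEquivSubtypePerm (· ∉ s)).surjective
      ⟨π, fun x hx => fixes x (not_not.1 hx)⟩
    have hσ : Perm.ofSubtype σ = π := congrArg Subtype.val hσ
    refine ⟨σ, ?_, hσ⟩
    simpa using Perm.ofSubtype_injective (by rw [map_mul, map_one, hσ, hπ])

lemma card_mul_self_eq_one_and_apply_eq (a b : α) :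
    #{π : Perm α | π * π = 1 ∧ π a = b} = #(involutions (Fintype.card α - #{a, b})) := by
  rw [← card_mul_self_eq_one_and_fixes]
  exact card_equiv (Equiv.mulLeft (swap a b)) fun π => by
    simpa using mul_self_eq_one_and_apply_eq_iff

lemma card_involutions_add_two (n : ℕ) :
    #(involutions (n + 2)) = #(involutions (n + 1)) + (n + 1) * #(involutions n) := by
  have card_fiber (b : Fin (n + 2)) :
      #{π ∈ involutions (n + 2) | π 0 = b} = #(involutions (n + 2 - #{0, b})) := by
    rw [involutions, filter_filter, card_mul_self_eq_one_and_apply_eq, Fintype.card_fin]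
  have card_fiber_zero : #{π ∈ involutions (n + 2) | π 0 = 0} = #(involutions (n + 1)) := by
    rw [card_fiber, pair_eq_singleton, card_singleton, Nat.add_one_sub_one]
  have card_fiber_succ (i : Fin (n + 1)) :
      #{π ∈ involutions (n + 2) | π 0 = i.succ} = #(involutions n) := by
    rw [card_fiber, card_pair (Fin.succ_ne_zero i).symm, Nat.add_sub_cancel]
  calc #(involutions (n + 2))
      = ∑ b : Fin (n + 2), #{π ∈ involutions (n + 2) | π 0 = b} :=
        card_eq_sum_card_fiberwise (by simp)
    _ = #(involutions (n + 1)) + ∑ _i : Fin (n + 1), #(involutions n) := by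
        rw [Fin.sum_univ_succ, card_fiber_zero, sum_congr rfl fun i _ => card_fiber_succ i]
    _ = #(involutions (n + 1)) + (n + 1) * #(involutions n) := by
        rw [sum_const, card_univ, Fintype.card_fin, smul_eq_mul]

end Involutions

/-- `Σ_{(a_1,…,a_m) ∈ C_{≤2}(n)} Π_{i : a_i = 2} (1 + a_1 + ⋯ + a_{i-1}) = i_n`,
the number of involutions of `S_n`. -/
theorem sum_comps_prod_eq_card_involutions (n : ℕ) (hn : 1 ≤ n) :
    ∑ c ∈ compsLe2 n, ∏ i ∈ Finset.range c.blocks.length,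
        (if c.blocks.getD i 0 = 2 then 1 + (c.blocks.take i).sum else 1) =
      (involutions n).card := by
  let weight (s a : ℕ) : ℕ := if a = 2 then 1 + s else 1
  change ∑ c ∈ compsLe2 n, partialSumProd weight c.blocks = #(involutions n)
  clear hn
  induction n using Nat.twoStepInduction with
  | zero => rw [compsLe2_eq_singleton_ones zero_le_one]; rfl
  | one => rw [compsLe2_eq_singleton_ones le_rfl]; rfl
  | more n ih₀ ih₁ =>
    rw [sum_compsLe2_add_two, card_involutions_add_two, ih₀, ih₁]
    simp [weight, add_comm, mul_comm]
end

section
/- For every integer n ≥ 0, (1/(n+2)) · Σ_{(a_1,…,a_m) ∈ C_{≤2}(n)} Π_{i : a_i = 2} 1/(a_1 + ⋯ + a_i) = Σ_{k=0}^{n+2} (−1)^k / k!, where the sum is over all compositions of n with parts in {1,2} and the product is over the indices i whose part a_i equals 2 (an empty product equals 1). -/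
open Finset

/-!
Let `W n` be the weighted sum over the compositions of `n`. The last part of a composition of
`n + 2` is a `1`, which does not change the weight, or a `2`, which multiplies it by `1 / (n + 2)`,
so `W (n + 2) = W (n + 1) + W n / (n + 2)`. Multiplied by `(n + 3)!` this becomes the recurrence
`D (n + 4) = (n + 3) * (D (n + 2) + D (n + 3))` of the derangement numbers for
`D (n + 2) = (n + 1)! * W n`. Hence `W n / (n + 2) = D (n + 2) / (n + 2)!`, which is the truncated
exponential series at `-1`.
-/

lemma mem_compsLe2 {n : ℕ} {c : Composition n} :
    c ∈ compsLe2 n ↔ ∀ a ∈ c.blocks, a = 1 ∨ a = 2 := by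
  simp [compsLe2]

lemma append_single_mem_compsLe2 {n a : ℕ} (ha : 0 < a) (c : Composition n) :
    c.append (.single a ha) ∈ compsLe2 (n + a) ↔ c ∈ compsLe2 n ∧ (a = 1 ∨ a = 2) := by
  simp only [mem_compsLe2, Composition.append_blocks, Composition.single_blocks,
    List.forall_mem_append, List.forall_mem_singleton]

lemma composition_append_left_injective {m n : ℕ} (d : Composition n) :
    Function.Injective fun c : Composition m => c.append d :=
  fun _ _ h => Composition.ext (List.append_cancel_right (congrArg Composition.blocks h))

lemma exists_append_single_eq_iff {n a : ℕ} (ha : 0 < a) (c : Composition (n + a)) :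
    (∃ d : Composition n, d.append (.single a ha) = c) ↔ c.blocks.getLast? = some a := by
  constructor
  · rintro ⟨d, rfl⟩
    simp
  · intro hlast
    obtain ⟨l, hl⟩ := List.getLast?_eq_some_iff.mp hlast
    have hsum : l.sum = n := by simpa [hl] using c.blocks_sum
    exact ⟨⟨l, fun hi => c.blocks_pos (by simp [hl, hi]), hsum⟩, Composition.ext (by simp [hl])⟩

lemma getLast?_blocks_of_mem_compsLe2 {n : ℕ} {c : Composition (n + 1)}
    (hc : c ∈ compsLe2 (n + 1)) : c.blocks.getLast? = some 1 ∨ c.blocks.getLast? = some 2 := by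
  have hne : c.blocks ≠ [] := fun h => by simpa [h] using c.blocks_sum
  simpa [List.getLast?_eq_some_getLast hne] using mem_compsLe2.mp hc _ (List.getLast_mem hne)

lemma compsLe2_add_two_s7 (n : ℕ) :
    compsLe2 (n + 2) =
      (compsLe2 (n + 1)).image (fun c => c.append (.single 1 one_pos)) ∪
        (compsLe2 n).image (fun c => c.append (.single 2 two_pos)) := by
  ext c
  rw [mem_union, mem_image, mem_image]
  constructor
  · intro hc
    rcases getLast?_blocks_of_mem_compsLe2 hc with hlast | hlast
    · obtain ⟨d, rfl⟩ := (exists_append_single_eq_iff (n := n + 1) one_pos c).mpr hlast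
      exact .inl ⟨d, ((append_single_mem_compsLe2 one_pos d).mp hc).1, rfl⟩
    · obtain ⟨d, rfl⟩ := (exists_append_single_eq_iff two_pos c).mpr hlast
      exact .inr ⟨d, ((append_single_mem_compsLe2 two_pos d).mp hc).1, rfl⟩
  · rintro (⟨d, hd, rfl⟩ | ⟨d, hd, rfl⟩)
    · exact (append_single_mem_compsLe2 one_pos d).mpr ⟨hd, .inl rfl⟩
    · exact (append_single_mem_compsLe2 two_pos d).mpr ⟨hd, .inr rfl⟩

lemma sum_compsLe2_add_two_s7 {M : Type*} [AddCommMonoid M] {n : ℕ} (f : Composition (n + 2) → M) :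
    ∑ c ∈ compsLe2 (n + 2), f c =
      ∑ c ∈ compsLe2 (n + 1), f (c.append (.single 1 one_pos)) +
        ∑ c ∈ compsLe2 n, f (c.append (.single 2 two_pos)) := by
  rw [compsLe2_add_two_s7, sum_union, sum_image (composition_append_left_injective _).injOn,
    sum_image (composition_append_left_injective _).injOn]
  simp only [disjoint_left, mem_image]
  rintro c ⟨d, -, hd⟩ ⟨e, -, he⟩
  have hlast_one := (exists_append_single_eq_iff (n := n + 1) one_pos c).mp ⟨d, hd⟩
  have hlast_two := (exists_append_single_eq_iff two_pos c).mp ⟨e, he⟩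
  simp [hlast_one] at hlast_two

section Weight

variable (K : Type*) [Semifield K]

/-- The weight `∏_{i : a_i = 2} 1 / (a_1 + ⋯ + a_i)` of a list `(a_1, …, a_m)`, with values in `K`.
It is defined on lists because the recursion on the last part changes the type of a composition.
The index `i` of the code is zero-based. -/
def twoPartWeight (l : List ℕ) : K :=
  ∏ i ∈ range l.length, if l.getD i 0 = 2 then ((l.take (i + 1)).sum : K)⁻¹ else 1

lemma twoPartWeight_append_singleton (l : List ℕ) (a : ℕ) :
    twoPartWeight K (l ++ [a]) =
      twoPartWeight K l * if a = 2 then ((l.sum + a : ℕ) : K)⁻¹ else 1 := by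
  simp only [twoPartWeight, List.length_append, List.length_singleton, prod_range_succ]
  congr 1
  · refine prod_congr rfl fun i hi => ?_
    have hi : i < l.length := mem_range.mp hi
    rw [List.getD_append _ _ _ _ hi, List.take_append_of_le_length hi]
  · simp

/-- The total weight of the compositions of `n` with parts in `{1, 2}`. -/
def twoPartWeightSum (n : ℕ) : K :=
  ∑ c ∈ compsLe2 n, twoPartWeight K c.blocks

lemma twoPartWeightSum_of_le_one {n : ℕ} (hn : n ≤ 1) : twoPartWeightSum K n = 1 := by
  have : Subsingleton (Composition n) :=
    Fintype.card_le_one_iff_subsingleton.mp (by simp [composition_card, Nat.sub_eq_zero_of_le hn])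
  have hones : .ones n ∈ compsLe2 n := by simp +contextual [mem_compsLe2, Composition.ones_blocks]
  rw [twoPartWeightSum, eq_singleton_iff_unique_mem.mpr ⟨hones, fun _ _ => Subsingleton.elim _ _⟩,
    sum_singleton]
  interval_cases n <;> simp [twoPartWeight]

lemma twoPartWeightSum_add_two (n : ℕ) :
    twoPartWeightSum K (n + 2) =
      twoPartWeightSum K (n + 1) + twoPartWeightSum K n * ((n + 2 : ℕ) : K)⁻¹ := by
  simp only [twoPartWeightSum, sum_compsLe2_add_two_s7, Composition.append_blocks,
    Composition.single_blocks, twoPartWeight_append_singleton, Composition.blocks_sum, sum_mul]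
  simp

lemma factorial_mul_twoPartWeightSum [CharZero K] (n : ℕ) :
    ((n + 1).factorial : K) * twoPartWeightSum K n = numDerangements (n + 2) := by
  induction n using Nat.twoStepInduction with
  | zero => simp [twoPartWeightSum_of_le_one, numDerangements_add_two]
  | one => simp [twoPartWeightSum_of_le_one, numDerangements_add_two]
  | more n ih ih_succ =>
    have hn : ((n + 2 : ℕ) : K) ≠ 0 := Nat.cast_ne_zero.mpr (by lia)
    have hfact_succ : ((n + 3).factorial : K) = (n + 3 : ℕ) * (n + 2).factorial :=
      mod_cast (n + 2).factorial_succ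
    have hfact : ((n + 2).factorial : K) = (n + 2 : ℕ) * (n + 1).factorial :=
      mod_cast (n + 1).factorial_succ
    calc ((n + 3).factorial : K) * twoPartWeightSum K (n + 2)
        = (n + 3 : ℕ) * ((n + 1).factorial * twoPartWeightSum K n +
            (n + 2).factorial * twoPartWeightSum K (n + 1)) := by
          rw [twoPartWeightSum_add_two, hfact_succ, hfact]
          field_simp
          ring
      _ = (n + 3 : ℕ) * (numDerangements (n + 2) + numDerangements (n + 3)) := by
          rw [ih, ih_succ]
      _ = numDerangements (n + 4) := by
          rw [numDerangements_add_two (n + 2)]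
          push_cast
          ring

end Weight

lemma numDerangements_div_factorial (K : Type*) [Field K] [CharZero K] (n : ℕ) :
    (numDerangements n : K) / n.factorial =
      ∑ k ∈ range (n + 1), (-1 : K) ^ k / k.factorial := by
  induction n with
  | zero => simp
  | succ n ih =>
    have hn : (n : K) + 1 ≠ 0 := n.cast_add_one_ne_zero
    have hfact : (n.factorial : K) ≠ 0 := Nat.cast_ne_zero.mpr n.factorial_ne_zero
    have hrec : (numDerangements (n + 1) : K) = (n + 1) * numDerangements n - (-1) ^ n :=
      mod_cast congrArg (Int.cast : ℤ → K) (numDerangements_succ n)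
    rw [sum_range_succ, ← ih, hrec, Nat.factorial_succ, pow_succ]
    push_cast
    field_simp
    ring

theorem sum_comps_prod_inv_eq_der_sum_general (K : Type*) [Field K] [CharZero K] (n : ℕ) :
    ((n : K) + 2)⁻¹ * ∑ c ∈ compsLe2 n, ∏ i ∈ range c.blocks.length,
        (if c.blocks.getD i 0 = 2 then ((c.blocks.take (i + 1)).sum : K)⁻¹ else 1) =
      ∑ k ∈ range (n + 3), (-1 : K) ^ k / k.factorial := by
  have hfact : ((n + 1).factorial : K) ≠ 0 := Nat.cast_ne_zero.mpr (n + 1).factorial_ne_zero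
  have hfact_succ : ((n + 2).factorial : K) = (n + 2) * (n + 1).factorial :=
    mod_cast (n + 1).factorial_succ
  change ((n : K) + 2)⁻¹ * twoPartWeightSum K n = _
  rw [← numDerangements_div_factorial K (n + 2), ← factorial_mul_twoPartWeightSum, hfact_succ,
    mul_comm ((n : K) + 2), mul_div_mul_left _ _ hfact, inv_mul_eq_div]

/-- `(1/(n+2)) Σ_{(a_1,…,a_m) ∈ C_{≤2}(n)} Π_{i : a_i = 2} 1/(a_1 + ⋯ + a_i)
  = Σ_{k=0}^{n+2} (-1)^k / k!`. -/
theorem sum_comps_prod_inv_eq_der_sum (n : ℕ) :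
    (((n : ℝ) + 2)⁻¹) * ∑ c ∈ compsLe2 n, ∏ i ∈ Finset.range c.blocks.length,
        (if c.blocks.getD i 0 = 2 then (((c.blocks.take (i + 1)).sum : ℝ))⁻¹ else 1) =
      ∑ k ∈ Finset.range (n + 3), (-1 : ℝ) ^ k / (Nat.factorial k : ℝ) :=
  sum_comps_prod_inv_eq_der_sum_general ℝ n
end

section
/- For all integers n ≥ 2 and k ≥ 0, the numbers D_{n,k} of derangements of {1,…,n} with exactly k descents satisfy D_{n,k} = (k+1)·D_{n−1,k} + (n−k−1)·D_{n−1,k−1} + k·D_{n−2,k−1} + (n−k)·D_{n−2,k−2}, with the conventions D_{0,0} = 1, D_{m,k} = 0 whenever k < 0, and D_{m,k} = 0 when there is no derangement of {1,…,m} with k descents. -/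
open Finset

/-- `D_{n,k}`: the number of derangements of `{1,…,n}` with exactly `k` descents,
with `D_{n,k} = 0` for `k < 0`. -/
def derDes (n : ℕ) (k : ℤ) : ℕ :=
  ((derangementSet n).filter fun π => (descents π : ℤ) = k).card

/-!
Stably sorting a word `w` of length `n` over an alphabet of `M` letters yields a permutation, and
the words that yield a given `π` number `(n + M - 1 - des π).choose n`. So the number of words whose
sorting permutation is a derangement is the Worpitzky sum with coefficients `D_{n,k}`, and this sum
determines its coefficients.

An occurrence of a letter `c` is not moved by stable sorting exactly when it is balanced: the
letters before it that exceed `c` are as many as the letters after it that are less than `c`. Every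
word can be cut at a place that is balanced for `c`, uniquely up to moving past copies of `c`, and
inserting `c` there does not affect whether another letter has a balanced occurrence. Hence, writing
`H(n, T)` for the number of words of length `n` with no balanced occurrence of a letter of `T`,
`H(n + 1, T ∪ {c}) = H(n + 1, T) - H(n, T)`, and induction on `T` gives
`H(n + 1, T) = M * H(n, T) + (-1) ^ (n + 1) * (#T).choose (n + 1)`.

For `T` the full alphabet, comparing Worpitzky coefficients yields
`D_{n+1,k} = (k + 1) D_{n,k} + (n + 1 - k) D_{n,k-1} + [k = n] (-1) ^ (n + 1)`,
and the sum of the instances at `(n, k)` and `(n - 1, k - 1)` is free of the sign term.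
-/

section Words
variable {α : Type*} [LinearOrder α] {c d : α} {a b a' b' e p q : List α}

/-- The cut of the word `a ++ b` between `a` and `b` is balanced for the letter `c`: the letters
greater than `c` on its left are as many as the letters less than `c` on its right. Equivalently, a
`c` inserted at the cut keeps its position when the word is stably sorted. -/
def IsBalancedCut (c : α) (a b : List α) : Prop :=
  a.countP (c < ·) = b.countP (· < c)

/-- Some occurrence of the letter `c` in the word `w` is balanced, that is, keeps its position when
`w` is stably sorted. -/
def HasBalanced (c : α) (w : List α) : Prop :=
  ∃ a b, w = a ++ c :: b ∧ IsBalancedCut c a b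

theorem isBalancedCut_iff_length_eq :
    IsBalancedCut c a b ↔ a.length = (a ++ b).countP (· < c) + a.count c := by
  have length_eq : a.length = a.countP (· < c) + a.count c + a.countP (c < ·) := by
    induction a with
    | nil => simp
    | cons x a ih =>
      simp only [List.length_cons, List.countP_cons, List.count_cons, decide_eq_true_eq, beq_iff_eq]
      rcases lt_trichotomy x c with hx | hx | hx <;> grind
  rw [IsBalancedCut, List.countP_append]
  omega

/-- Moving the cut one letter to the right raises the left count or lowers the right count, never
both, so the two counts must meet. -/
theorem exists_append_eq_append_isBalancedCut (b : List α) :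
    ∀ a, a.countP (c < ·) ≤ b.countP (· < c) →
      ∃ a' b', a ++ b = a' ++ b' ∧ IsBalancedCut c a' b' := by
  induction b with
  | nil => exact fun a h => ⟨a, [], rfl, by simpa [IsBalancedCut] using h⟩
  | cons x b ih =>
    intro a h
    rcases h.eq_or_lt with h | h
    · exact ⟨a, x :: b, rfl, h⟩
    · have h' : (a ++ [x]).countP (c < ·) ≤ b.countP (· < c) := by
        grind
      simpa using ih (a ++ [x]) h'

theorem exists_eq_append_isBalancedCut (c : α) (u : List α) :
    ∃ a b, u = a ++ b ∧ IsBalancedCut c a b := by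
  simpa using exists_append_eq_append_isBalancedCut (c := c) u [] (by simp)

/-- A word between two balanced cuts consists of copies of `c`. -/
theorem IsBalancedCut.append_cons_comm (h : IsBalancedCut c a (e ++ b))
    (h' : IsBalancedCut c (a ++ e) b) (l : List α) : e ++ c :: l = c :: (e ++ l) := by
  simp only [IsBalancedCut, List.countP_append] at h h'
  have no_gt : e.countP (c < ·) = 0 := by omega
  have no_lt : e.countP (· < c) = 0 := by omega
  have eq_c : ∀ x ∈ e, x = c := fun x hx =>
    le_antisymm (by simpa using List.countP_eq_zero.1 no_gt x hx)
      (by simpa using List.countP_eq_zero.1 no_lt x hx)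
  rw [List.eq_replicate_of_mem eq_c, ← List.cons_append, ← List.replicate_succ,
    List.replicate_succ', List.append_assoc, List.singleton_append]

theorem isBalancedCut_cons_self : IsBalancedCut c a (c :: b) ↔ IsBalancedCut c a b := by
  simp [IsBalancedCut]

theorem IsBalancedCut.insert_inj (h : IsBalancedCut c a b) (h' : IsBalancedCut c a' b') :
    a ++ c :: b = a' ++ c :: b' ↔ a ++ b = a' ++ b' := by
  constructor <;> intro heq
  · rw [← isBalancedCut_cons_self] at h h'
    rcases List.append_eq_append_iff.1 heq with ⟨e, rfl, he⟩ | ⟨e, rfl, he⟩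
    · rw [he] at h
      rw [h.append_cons_comm h'] at he
      rw [(List.cons.inj he).2, List.append_assoc]
    · rw [he] at h'
      rw [h'.append_cons_comm h] at he
      rw [(List.cons.inj he).2, List.append_assoc]
  · rcases List.append_eq_append_iff.1 heq with ⟨e, rfl, rfl⟩ | ⟨e, rfl, rfl⟩
    · rw [List.append_assoc, h.append_cons_comm h']
    · rw [List.append_assoc, h'.append_cons_comm h]

theorem hasBalanced_append_iff : HasBalanced d (a ++ b) ↔
    (∃ p e, a = p ++ d :: e ∧ IsBalancedCut d p (e ++ b)) ∨
      ∃ e q, b = e ++ d :: q ∧ IsBalancedCut d (a ++ e) q := by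
  constructor
  · rintro ⟨p, q, heq, hd⟩
    rcases List.append_eq_append_iff.1 heq with ⟨e, rfl, rfl⟩ | ⟨e, rfl, he⟩
    · exact .inr ⟨e, q, rfl, hd⟩
    · rcases List.cons_eq_append_iff.1 he with ⟨rfl, rfl⟩ | ⟨e, rfl, rfl⟩
      · exact .inr ⟨[], q, rfl, by simpa using hd⟩
      · exact .inl ⟨p, e, rfl, hd⟩
  · rintro (⟨p, e, rfl, hd⟩ | ⟨e, q, rfl, hd⟩)
    · exact ⟨p, e ++ b, by simp, hd⟩
    · exact ⟨a ++ e, q, by simp, hd⟩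

theorem countP_gt_anti (h : c ≤ d) (l : List α) : l.countP (d < ·) ≤ l.countP (c < ·) :=
  List.countP_mono_left fun x _ hx => by simpa using h.trans_lt (by simpa using hx)

theorem countP_lt_mono (h : c ≤ d) (l : List α) : l.countP (· < c) ≤ l.countP (· < d) :=
  List.countP_mono_left fun x _ hx => by simpa using (show x < c by simpa using hx).trans_le h

/-- If `c < d`, both sides are false: the letters of `p` above `d`, together with `d` itself, are at
most as many as the letters of `b` below `c`. -/
theorem IsBalancedCut.insert_right_iff (h : IsBalancedCut c (p ++ d :: e) b) (hdc : d ≠ c) :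
    IsBalancedCut d p (e ++ c :: b) ↔ IsBalancedCut d p (e ++ b) := by
  rcases hdc.lt_or_gt with hdc | hcd
  · simp [IsBalancedCut, hdc.not_gt]
  · have := countP_gt_anti hcd.le p
    have := countP_lt_mono hcd.le b
    simp only [IsBalancedCut, List.countP_append, hcd, decide_true, List.countP_cons_of_pos] at h ⊢
    omega

theorem IsBalancedCut.insert_left_iff (h : IsBalancedCut c a (e ++ d :: q)) (hdc : d ≠ c) :
    IsBalancedCut d (a ++ c :: e) q ↔ IsBalancedCut d (a ++ e) q := by
  rcases hdc.lt_or_gt with hdc | hcd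
  · have := countP_gt_anti hdc.le a
    have := countP_lt_mono hdc.le q
    simp only [IsBalancedCut, List.countP_append, hdc, decide_true, List.countP_cons_of_pos] at h ⊢
    omega
  · simp [IsBalancedCut, hcd.not_gt]

theorem IsBalancedCut.hasBalanced_insert_iff (h : IsBalancedCut c a b) (hdc : d ≠ c) :
    HasBalanced d (a ++ c :: b) ↔ HasBalanced d (a ++ b) := by
  rw [hasBalanced_append_iff, hasBalanced_append_iff]
  refine or_congr (exists₂_congr fun p e => and_congr_right ?_) ?_
  · rintro rfl
    exact h.insert_right_iff hdc
  · constructor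
    · rintro ⟨e, q, he, hd⟩
      rcases List.cons_eq_append_iff.1 he with ⟨-, hcons⟩ | ⟨e, rfl, rfl⟩
      · exact absurd (List.cons.inj hcons).1 hdc
      · exact ⟨e, q, rfl, (h.insert_left_iff hdc).1 hd⟩
    · rintro ⟨e, q, rfl, hd⟩
      exact ⟨c :: e, q, rfl, (h.insert_left_iff hdc).2 hd⟩

/-- The words of length `n` in which no letter of `T` has a balanced occurrence; for `T` the whole
alphabet, these are the words whose stable sorting permutation is a derangement. -/
def unbalancedWords (n : ℕ) (T : Finset α) : Set (List α) :=
  {w | w.length = n ∧ ∀ d ∈ T, ¬ HasBalanced d w}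

theorem ncard_unbalancedWords_eq_ncard_hasBalanced (n : ℕ) {T : Finset α} (hc : c ∉ T) :
    (unbalancedWords n T).ncard = {w ∈ unbalancedWords (n + 1) T | HasBalanced c w}.ncard := by
  choose left right split_eq balanced using exists_eq_append_isBalancedCut c
  have mem_insert_iff {a b : List α} (h : IsBalancedCut c a b) :
      a ++ c :: b ∈ unbalancedWords (n + 1) T ↔ a ++ b ∈ unbalancedWords n T := by
    refine and_congr (by simp [← add_assoc]) (forall₂_congr fun d hd => ?_)
    rw [h.hasBalanced_insert_iff (ne_of_mem_of_not_mem hd hc)]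
  refine Set.BijOn.ncard_eq (f := fun u => left u ++ c :: right u) ⟨?_, ?_, ?_⟩
  · intro u hu
    exact ⟨(mem_insert_iff (balanced u)).2 (split_eq u ▸ hu), _, _, rfl, balanced u⟩
  · intro u _ v _ huv
    rw [split_eq u, split_eq v]
    exact ((balanced u).insert_inj (balanced v)).1 huv
  · rintro _ ⟨hw, a, b, rfl, h⟩
    exact ⟨a ++ b, (mem_insert_iff h).1 hw, ((balanced _).insert_inj h).2 (split_eq _).symm⟩

theorem ncard_unbalancedWords_zero (T : Finset α) : (unbalancedWords 0 T).ncard = 1 := by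
  refine Set.ncard_eq_one.2 ⟨[], Set.ext fun w => ?_⟩
  simp +contextual [unbalancedWords, HasBalanced]

theorem finite_unbalancedWords [Finite α] (n : ℕ) (T : Finset α) : (unbalancedWords n T).Finite :=
  (List.finite_length_eq α n).subset fun _ hw => hw.1

theorem ncard_unbalancedWords_insert_add [Finite α] (n : ℕ) {T : Finset α} (hc : c ∉ T) :
    (unbalancedWords (n + 1) (insert c T)).ncard + (unbalancedWords n T).ncard =
      (unbalancedWords (n + 1) T).ncard := by
  have split : unbalancedWords (n + 1) (insert c T) =
      unbalancedWords (n + 1) T \ {w ∈ unbalancedWords (n + 1) T | HasBalanced c w} := by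
    ext w
    simp only [unbalancedWords, Set.mem_sdiff, Set.mem_ofPred_eq, forall_mem_insert]
    tauto
  rw [ncard_unbalancedWords_eq_ncard_hasBalanced n hc, split]
  exact Set.ncard_sdiff_add_ncard_of_subset (Set.sep_subset _ _) (finite_unbalancedWords _ _)

variable [Fintype α]

theorem ncard_unbalancedWords_empty (n : ℕ) :
    (unbalancedWords n (∅ : Finset α)).ncard = Fintype.card α ^ n := by
  rw [← card_vector n, ← Nat.card_eq_fintype_card, ← Nat.card_coe_set_eq]
  exact Nat.card_congr (Equiv.subtypeEquivRight fun w => by simp [unbalancedWords])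

theorem ncard_unbalancedWords_succ (T : Finset α) : ∀ n,
    ((unbalancedWords (n + 1) T).ncard : ℤ) =
      Fintype.card α * (unbalancedWords n T).ncard + (-1) ^ (n + 1) * (#T).choose (n + 1) := by
  induction T using Finset.induction_on with
  | empty => simp [ncard_unbalancedWords_empty, pow_succ']
  | insert c T hc ih =>
    have step (n : ℕ) : ((unbalancedWords (n + 1) (insert c T)).ncard : ℤ) =
        (unbalancedWords (n + 1) T).ncard - (unbalancedWords n T).ncard :=
      eq_sub_of_add_eq (mod_cast ncard_unbalancedWords_insert_add n hc)
    intro n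
    rw [step, ih, card_insert_of_notMem hc, Nat.choose_succ_succ]
    cases n with
    | zero =>
      simp only [ncard_unbalancedWords_zero, Nat.choose_zero_right]
      push_cast
      ring
    | succ n =>
      rw [step, ih]
      push_cast
      ring

end Words

theorem countP_take_ofFn {α : Type*} {n : ℕ} (w : Fin n → α) (p : α → Bool) (i : ℕ) :
    ((List.ofFn w).take i).countP p = #{j : Fin n | j < i ∧ p (w j)} := by
  have countP_eq_sum (l : List α) : l.countP p = (l.map fun x => if p x then 1 else 0).sum := by
    induction l with
    | nil => rfl
    | cons x l ih => rw [List.countP_cons, ih, List.map_cons, List.sum_cons, add_comm]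
  rw [countP_eq_sum, List.map_take, List.map_ofFn, List.sum_take_ofFn, ← filter_filter, card_filter]
  rfl

section StableSort
variable {α : Type*} [LinearOrder α] {n : ℕ}

theorem sort_symm_apply_val (w : Fin n → α) (i : Fin n) :
    ((Tuple.sort w).symm i : ℕ) = #{j | w j < w i} + #{j | j < i ∧ w j = w i} := by
  have sort_lt_iff (j : Fin n) : (Tuple.sort w).symm j < (Tuple.sort w).symm i ↔
      w j < w i ∨ w j = w i ∧ j < i := by
    have hmono := Tuple.eq_sort_iff'.1 (Eq.refl (Tuple.sort w))
    rw [← hmono.lt_iff_lt, Equiv.trans_apply, Equiv.trans_apply, Equiv.apply_symm_apply,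
      Equiv.apply_symm_apply]
    exact Prod.Lex.toLex_lt_toLex
  calc ((Tuple.sort w).symm i : ℕ)
      = #{j | (Tuple.sort w).symm j < (Tuple.sort w).symm i} := by
        rw [← Fin.card_Iio, ← card_map (Tuple.sort w).toEmbedding]
        congr 1
        ext j
        simp
    _ = #{j | w j < w i} + #{j | j < i ∧ w j = w i} := by
        rw [← card_union_of_disjoint, ← filter_or]
        · simp only [sort_lt_iff, and_comm]
        · exact disjoint_filter.2 fun j _ hlt heq => hlt.ne heq.2

theorem sort_apply_eq_self_iff (w : Fin n → α) (i : Fin n) :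
    Tuple.sort w i = i ↔
      IsBalancedCut (w i) ((List.ofFn w).take i) ((List.ofFn w).drop i) := by
  have countP_ofFn : (List.ofFn w).countP (· < w i) = #{j | w j < w i} := by
    rw [← List.take_of_length_le (List.length_ofFn (f := w)).le, countP_take_ofFn]
    simp
  rw [isBalancedCut_iff_length_eq, List.take_append_drop, countP_ofFn, List.count,
    countP_take_ofFn, List.length_take, List.length_ofFn, min_eq_left i.2.le, eq_comm,
    ← Equiv.symm_apply_eq, Fin.ext_iff, sort_symm_apply_val, eq_comm]
  simp only [beq_iff_eq, Fin.lt_def]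

theorem hasBalanced_ofFn_iff (w : Fin n → α) (c : α) :
    HasBalanced c (List.ofFn w) ↔ ∃ i, w i = c ∧ Tuple.sort w i = i := by
  simp only [sort_apply_eq_self_iff]
  constructor
  · rintro ⟨a, b, hw, h⟩
    have hlen : a.length < n := by
      rw [← List.length_ofFn (f := w), hw]
      simp
    have hc : w ⟨a.length, hlen⟩ = c := by
      rw [← List.getElem_ofFn (f := w) (by simpa using hlen)]
      simp [hw]
    exact ⟨⟨a.length, hlen⟩, hc, by simpa [hw, hc, isBalancedCut_cons_self] using h⟩
  · rintro ⟨i, rfl, h⟩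
    have hdrop : (List.ofFn w).drop i = w i :: (List.ofFn w).drop (i + 1) := by
      rw [List.drop_eq_getElem_cons (by simp), List.getElem_ofFn]
    rw [hdrop, isBalancedCut_cons_self] at h
    exact ⟨_, _, by rw [← hdrop, List.take_append_drop], h⟩

theorem ncard_unbalancedWords_univ [Fintype α] (n : ℕ) :
    (unbalancedWords n (univ : Finset α)).ncard =
      #{w : Fin n → α | Tuple.sort w ∈ derangementSet n} := by
  have ofFn_mem_iff (w : Fin n → α) :
      List.ofFn w ∈ unbalancedWords n univ ↔ Tuple.sort w ∈ derangementSet n := by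
    simp only [unbalancedWords, derangementSet, hasBalanced_ofFn_iff, Set.mem_ofPred_eq,
      List.length_ofFn, mem_filter_univ, mem_univ, true_and, forall_const, not_exists, not_and]
    exact ⟨fun h i => h _ i rfl, fun h _ i _ => h i⟩
  rw [← Set.ncard_coe_finset, ← Set.ncard_image_of_injective _ List.ofFn_injective]
  congr 1
  ext l
  simp only [Set.mem_image, mem_coe, mem_filter_univ, ← ofFn_mem_iff]
  constructor
  · intro hl
    obtain rfl := hl.1
    exact ⟨l.get, by rwa [List.ofFn_get], List.ofFn_get l⟩
  · rintro ⟨w, hw, rfl⟩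
    exact hw

end StableSort

section StrictMonoShift
variable {N : ℕ} {e : Fin (N + 1) → ℕ}

theorem monotone_sub_of_strictMono (he : ∀ i : Fin N, e i.succ ≤ e i.castSucc + 1)
    {t : Fin (N + 1) → ℕ} (ht : StrictMono t) : Monotone fun i => (t i : ℤ) - e i := by
  refine Fin.monotone_iff_le_succ.2 fun i => ?_
  have := ht i.castSucc_lt_succ
  have := he i
  omega

theorem card_strictMono_add (m : ℕ) (he_zero : e 0 = 0) (he_mono : Monotone e)
    (he_succ : ∀ i : Fin N, e i.succ ≤ e i.castSucc + 1) :
    Nat.card {s : Fin (N + 1) → Fin m // StrictMono fun i => (s i : ℕ) + e i} =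
      (m + e (Fin.last N)).choose (N + 1) := by
  have val_strictMono (t : Fin (N + 1) ↪o Fin (m + e (Fin.last N))) :
      StrictMono fun i => (t i : ℕ) :=
    Fin.val_strictMono.comp t.strictMono
  have sub_mono (t : Fin (N + 1) ↪o Fin (m + e (Fin.last N))) :
      Monotone fun i => ((t i : ℕ) : ℤ) - e i :=
    monotone_sub_of_strictMono he_succ (val_strictMono t)
  have e_le (t : Fin (N + 1) ↪o Fin (m + e (Fin.last N))) (i) : e i ≤ t i := by
    have zero_le : ((t 0 : ℕ) : ℤ) - e 0 ≤ (t i : ℕ) - e i := sub_mono t (Fin.zero_le i)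
    omega
  have sub_lt (t : Fin (N + 1) ↪o Fin (m + e (Fin.last N))) (i) : t i - e i < m := by
    have le_last : ((t i : ℕ) : ℤ) - e i ≤ (t (Fin.last N) : ℕ) - e (Fin.last N) :=
      sub_mono t (Fin.le_last i)
    have := e_le t i
    omega
  have shift : {s : Fin (N + 1) → Fin m // StrictMono fun i => (s i : ℕ) + e i} ≃
      (Fin (N + 1) ↪o Fin (m + e (Fin.last N))) :=
    { toFun s := OrderEmbedding.ofStrictMono
        (fun i => ⟨s.1 i + e i, add_lt_add_of_lt_of_le (s.1 i).2 (he_mono (Fin.le_last i))⟩) s.2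
      invFun t := ⟨fun i => ⟨t i - e i, sub_lt t i⟩, by
        simpa only [Nat.sub_add_cancel (e_le t _)] using val_strictMono t⟩
      left_inv s := by
        ext
        exact Nat.add_sub_cancel _ _
      right_inv t := by
        ext i
        exact Nat.sub_add_cancel (e_le t i) }
  rw [Nat.card_congr (shift.trans Set.powersetCard.ofFinEmbEquiv), Set.powersetCard.card,
    Nat.card_fin]

end StrictMonoShift

section Descents
variable {n N : ℕ}

theorem descents_le (π : Equiv.Perm (Fin n)) : descents π ≤ n :=
  (card_le_univ _).trans_eq (Fintype.card_fin n)

/-- The number of ascents `π j < π (j + 1)` of `π` at positions `j < i`, with positions counted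
from `0`. -/
def ascentsBefore (π : Equiv.Perm (Fin n)) (i : ℕ) : ℕ :=
  Nat.count (fun j => ∃ h : j + 1 < n, π ⟨j, j.lt_of_succ_lt h⟩ < π ⟨j + 1, h⟩) i

theorem ascentsBefore_succ (π : Equiv.Perm (Fin (N + 1))) (i : Fin N) :
    ascentsBefore π i.succ =
      ascentsBefore π i.castSucc + if π i.castSucc < π i.succ then 1 else 0 := by
  simp only [ascentsBefore, Fin.val_succ, Fin.val_castSucc, Nat.count_succ,
    Nat.add_lt_add_iff_right, i.is_lt, exists_true_left]
  rfl

theorem ascentsBefore_add_descents (π : Equiv.Perm (Fin (N + 1))) :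
    ascentsBefore π N + descents π = N := by
  have descents_eq : descents π =
      #{j ∈ range N | ¬ ∃ h : j + 1 < N + 1, π ⟨j, j.lt_of_succ_lt h⟩ < π ⟨j + 1, h⟩} := by
    rw [descents, ← card_map Fin.valEmbedding]
    congr 1
    ext j
    simp only [mem_map, mem_filter, mem_univ, true_and, Fin.valEmbedding_apply, mem_range,
      not_exists, not_lt]
    constructor
    · rintro ⟨i, ⟨h, hi⟩, rfl⟩
      exact ⟨Nat.lt_of_succ_lt_succ h, fun _ => hi.le⟩
    · rintro ⟨hj, h⟩
      have hne : π ⟨j + 1, by omega⟩ ≠ π ⟨j, by omega⟩ := π.injective.ne (by simp)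
      exact ⟨⟨j, by omega⟩, ⟨by simpa using hj, (h (by omega)).lt_of_ne hne⟩, rfl⟩
  rw [ascentsBefore, Nat.count_eq_card_filter_range, descents_eq, card_filter_add_card_filter_not,
    card_range]

/-- Stability makes `w ∘ π` weakly increasing, and strictly so across the descents of `π`; adding
`1` at each ascent turns this into strict monotonicity throughout. -/
theorem sort_eq_iff_strictMono_add_ascentsBefore {m : ℕ} (π : Equiv.Perm (Fin (N + 1)))
    (w : Fin (N + 1) → Fin m) :
    Tuple.sort w = π ↔ StrictMono fun i => (w (π i) : ℕ) + ascentsBefore π i := by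
  rw [eq_comm, Tuple.eq_sort_iff', Fin.strictMono_iff_lt_succ, Fin.strictMono_iff_lt_succ]
  refine forall_congr' fun i => Prod.Lex.toLex_lt_toLex.trans ?_
  rw [ascentsBefore_succ]
  simp only [Fin.lt_def, Fin.ext_iff]
  split_ifs <;> omega

theorem card_sort_eq (m : ℕ) (π : Equiv.Perm (Fin n)) :
    #{w : Fin n → Fin (m + 1) | Tuple.sort w = π} = (n + m - descents π).choose n := by
  rcases n with _ | N
  · simp [Subsingleton.elim _ π]
  have hcard := card_strictMono_add (m + 1) (e := fun i : Fin (N + 1) => ascentsBefore π i)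
    (by simp [ascentsBefore]) ((Nat.count_monotone _).comp Fin.val_strictMono.monotone)
    (fun i => by grind [ascentsBefore_succ])
  have htotal := ascentsBefore_add_descents π
  rw [Fin.val_last] at hcard
  rw [show N + 1 + m - descents π = m + 1 + ascentsBefore π N by omega, ← hcard,
    ← Fintype.card_subtype, ← Nat.card_eq_fintype_card]
  exact Nat.card_congr ((Equiv.arrowCongr π.symm (Equiv.refl _)).subtypeEquiv fun w =>
    sort_eq_iff_strictMono_add_ascentsBefore π w)

end Descents

theorem derDes_eq_zero_of_neg (n : ℕ) {k : ℤ} (hk : k < 0) : derDes n k = 0 :=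
  card_eq_zero.2 <| filter_eq_empty_iff.2 fun _ _ => by omega

theorem derDes_eq_zero_of_lt {n : ℕ} {k : ℤ} (hk : n < k) : derDes n k = 0 :=
  card_eq_zero.2 <| filter_eq_empty_iff.2 fun π _ => by grind [descents_le π]

section Worpitzky

/-- The combination of the Worpitzky basis `(n + m - k).choose n`, `0 ≤ k ≤ n`, with coefficients
`g k`, at the point `m`; it is the coefficient of `x ^ m` in `(∑ k, g k x ^ k) / (1 - x) ^ (n + 1)`.
The coefficients are indexed by `ℤ` so that they can be shifted. -/
def worpitzkySum (n : ℕ) (g : ℤ → ℤ) (m : ℕ) : ℤ :=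
  ∑ k ∈ range (n + 1), g k * (n + m - k).choose n

theorem ncard_unbalancedWords_univ_fin (m n : ℕ) :
    ((unbalancedWords n (univ : Finset (Fin (m + 1)))).ncard : ℤ) =
      worpitzkySum n (fun k => derDes n k) m := by
  have fiber (π) (hπ : π ∈ derangementSet n) :
      #{w ∈ {w : Fin n → Fin (m + 1) | Tuple.sort w ∈ derangementSet n} | Tuple.sort w = π} =
        (n + m - descents π).choose n := by
    rw [← card_sort_eq, filter_filter]
    congr 1
    ext w
    simp only [mem_filter_univ, and_iff_right_iff_imp]
    rintro rfl
    exact hπ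
  have descents_mem : ∀ π ∈ derangementSet n, descents π ∈ range (n + 1) :=
    fun π _ => mem_range_succ_iff.2 (descents_le π)
  rw [ncard_unbalancedWords_univ, worpitzkySum,
    card_eq_sum_card_fiberwise (f := Tuple.sort) (t := derangementSet n) (by simp [Set.MapsTo]),
    sum_congr rfl fiber, ← sum_fiberwise_of_maps_to descents_mem]
  push_cast
  refine sum_congr rfl fun k _ => ?_
  rw [sum_congr rfl fun π hπ => by rw [(mem_filter.1 hπ).2], sum_const, nsmul_eq_mul]
  simp [derDes]

theorem choose_mul_eq_add_choose {m n k : ℕ} (hk : k ≤ n) :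
    ((m : ℤ) + 1) * (n + m - k).choose n =
      (k + 1) * (n + 1 + m - k).choose (n + 1) + (n - k) * (n + m - k).choose (n + 1) := by
  obtain ⟨a, ha⟩ : ∃ a, n + m = a + k := ⟨n + m - k, by omega⟩
  have hsucc : n + 1 + m - k = a + 1 := by omega
  have hchoose : (a.choose (n + 1) : ℤ) * (n + 1) = a.choose n * (m - k) := by
    rcases lt_or_ge a n with h | h
    · simp [Nat.choose_eq_zero_of_lt h, Nat.choose_eq_zero_of_lt (Nat.lt_succ_of_lt h)]
    · have hsub : ((a - n : ℕ) : ℤ) = m - k := by omega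
      rw [← hsub]
      exact_mod_cast Nat.choose_succ_right_eq a n
  rw [ha, Nat.add_sub_cancel, hsucc, Nat.choose_succ_succ]
  push_cast
  linear_combination -hchoose

theorem mul_worpitzkySum (n m : ℕ) {g : ℤ → ℤ} (hneg : g (-1) = 0) (hlast : g (n + 1) = 0) :
    ((m : ℤ) + 1) * worpitzkySum n g m =
      worpitzkySum (n + 1) (fun k => (k + 1) * g k + (n + 1 - k) * g (k - 1)) m := by
  have upper : ∑ k ∈ range (n + 2), ((k : ℤ) + 1) * g k * (n + 1 + m - k).choose (n + 1) =
      ∑ k ∈ range (n + 1), ((k : ℤ) + 1) * g k * (n + 1 + m - k).choose (n + 1) := by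
    rw [sum_range_succ]
    simp [hlast]
  have lower : ∑ k ∈ range (n + 2),
        ((n : ℤ) + 1 - k) * g (k - 1) * (n + 1 + m - k).choose (n + 1) =
      ∑ k ∈ range (n + 1), ((n : ℤ) - k) * g k * (n + m - k).choose (n + 1) := by
    rw [sum_range_succ']
    simp [hneg, Nat.add_right_comm n 1 m]
  simp only [worpitzkySum, add_mul _ _ (Nat.cast _), sum_add_distrib]
  rw [upper, lower, ← sum_add_distrib, mul_sum]
  refine sum_congr rfl fun k hk => ?_
  linear_combination g k * choose_mul_eq_add_choose (m := m) (mem_range_succ_iff.1 hk)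

theorem worpitzkySum_add (n m : ℕ) (g g' : ℤ → ℤ) :
    worpitzkySum n (fun k => g k + g' k) m = worpitzkySum n g m + worpitzkySum n g' m := by
  simp only [worpitzkySum, add_mul, sum_add_distrib]

/-- At `m = k` the basis elements of index greater than `k` vanish, so the system is triangular. -/
theorem eq_of_worpitzkySum_eq {n : ℕ} {g g' : ℤ → ℤ}
    (h : ∀ m, worpitzkySum n g m = worpitzkySum n g' m) (k : ℕ) (hk : k ≤ n) : g k = g' k := by
  induction k using Nat.strong_induction_on with
  | _ k ih =>
    have hsum : ∑ j ∈ range (n + 1), (g j - g' j) * (n + k - j).choose n = 0 := by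
      simpa only [worpitzkySum, sub_mul, sum_sub_distrib] using sub_eq_zero.2 (h k)
    rw [sum_eq_single_of_mem k (mem_range_succ_iff.2 hk)] at hsum
    · simpa [sub_eq_zero] using hsum
    · intro j hj hjk
      have hjn := mem_range_succ_iff.1 hj
      rcases hjk.lt_or_gt with hlt | hgt
      · rw [ih j hlt hjn, sub_self, zero_mul]
      · rw [Nat.choose_eq_zero_of_lt (by omega), Nat.cast_zero, mul_zero]

theorem worpitzkySum_single (n m : ℕ) (x : ℤ) :
    worpitzkySum (n + 1) (fun k => if k = n then x else 0) m = x * (m + 1).choose (n + 1) := by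
  rw [worpitzkySum, sum_eq_single_of_mem n (by simp)]
  · rw [if_pos rfl, show n + 1 + m - n = m + 1 by omega]
  · intro k _ hk
    simp [hk]

end Worpitzky

theorem worpitzkySum_derDes_succ (n m : ℕ) :
    worpitzkySum (n + 1) (fun k => derDes (n + 1) k) m =
      worpitzkySum (n + 1) (fun k => (k + 1) * derDes n k + (n + 1 - k) * derDes n (k - 1) +
        if k = n then (-1) ^ (n + 1) else 0) m := by
  rw [worpitzkySum_add, worpitzkySum_single,
    ← mul_worpitzkySum n m (g := fun k => derDes n k) (by simp [derDes_eq_zero_of_neg])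
      (by simp [derDes_eq_zero_of_lt]),
    ← ncard_unbalancedWords_univ_fin, ← ncard_unbalancedWords_univ_fin, ncard_unbalancedWords_succ]
  simp

theorem derDes_succ (n : ℕ) (k : ℤ) :
    (derDes (n + 1) k : ℤ) = (k + 1) * derDes n k + (n + 1 - k) * derDes n (k - 1) +
      if k = n then (-1) ^ (n + 1) else 0 := by
  rcases lt_or_ge k 0 with hneg | hnonneg
  · simp [derDes_eq_zero_of_neg _ hneg, derDes_eq_zero_of_neg n (show k - 1 < 0 by omega),
      show k ≠ n by omega]
  rcases lt_or_ge ((n : ℤ) + 1) k with hlarge | hle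
  · simp [derDes_eq_zero_of_lt (n := n + 1) (mod_cast hlarge),
      derDes_eq_zero_of_lt (show n < k by omega), derDes_eq_zero_of_lt (show n < k - 1 by omega),
      show k ≠ n by omega]
  lift k to ℕ using hnonneg
  exact eq_of_worpitzkySum_eq (worpitzkySum_derDes_succ n) k (by omega)

/-- The second-order recurrence for the numbers `D_{n,k}` of derangements with `k` descents. -/
theorem derDes_recurrence (n : ℕ) (k : ℤ) (hn : 2 ≤ n) (hk : 0 ≤ k) :
    (derDes n k : ℤ) =
      (k + 1) * derDes (n - 1) k + ((n : ℤ) - k - 1) * derDes (n - 1) (k - 1) +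
        k * derDes (n - 2) (k - 1) + ((n : ℤ) - k) * derDes (n - 2) (k - 2) := by
  obtain ⟨n, rfl⟩ := Nat.exists_eq_add_of_le' hn
  have first := derDes_succ (n + 1) k
  have second := derDes_succ n (k - 1)
  have signs_cancel : (if k = (n + 1 : ℕ) then (-1 : ℤ) ^ (n + 2) else 0) +
      (if k - 1 = n then (-1) ^ (n + 1) else 0) = 0 := by
    by_cases h : k = n + 1 <;> simp [h, sub_eq_iff_eq_add, pow_succ]
  rw [show k - 1 - 1 = k - 2 by ring] at second
  rw [show n + 2 - 1 = n + 1 by omega, Nat.add_sub_cancel]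
  push_cast at first signs_cancel ⊢
  linear_combination first + second + signs_cancel
end

section
/- For every integer n ≥ 1, the expected number of descents of a uniformly random involution of S_n equals (n−1)/2; equivalently, 2 · Σ_{π ∈ S_n, π² = id} des(π) = (n−1) · i_n, where des(π) is the number of descents of π and i_n is the number of involutions in S_n. -/
open Finset

/-!
Fix adjacent positions `a ⋖ b` and let `s` be the transposition exchanging them. Among involutions
`π`, those with a descent from `a` to `b` are matched with those without one as follows. If `s`
commutes with `π`, replace `π` by `s * π`, which swaps the values at `a` and `b`. Otherwise replace
`π` by its conjugate `s * π * s`: this again swaps the two values, and then applies `s` to them,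
which does not affect their relative order because `{π a, π b} ≠ {a, b}`. Hence each of the `n - 1`
adjacent pairs is a descent of exactly half of the involutions.
-/

open Equiv Function

section Monoid

variable {M : Type*} [Monoid M] {s g : M}

theorem commute_mul_left_iff_of_mul_self_eq_one (hs : s * s = 1) :
    Commute s (s * g) ↔ Commute s g := by
  have commute_mul {x : M} (h : Commute s x) : Commute s (s * x) := (Commute.refl s).mul_right h
  refine ⟨fun h ↦ ?_, commute_mul⟩
  simpa only [← mul_assoc, hs, one_mul] using commute_mul h

theorem commute_mul_right_iff_of_mul_self_eq_one (hs : s * s = 1) :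
    Commute s (g * s) ↔ Commute s g := by
  have commute_mul {x : M} (h : Commute s x) : Commute s (x * s) := h.mul_right (Commute.refl s)
  refine ⟨fun h ↦ ?_, commute_mul⟩
  simpa only [mul_assoc, hs, mul_one] using commute_mul h

open scoped Classical in
/-- The toggle of `g` by an element `s` with `s * s = 1`: multiplication by `s` on the centralizer
of `s`, and conjugation by `s` (as `s⁻¹ = s`) elsewhere. It is an involution of the monoid that
preserves the solutions of `g * g = 1`. -/
noncomputable def toggle (s g : M) : M :=
  if Commute s g then s * g else s * g * s

theorem toggle_of_commute (h : Commute s g) : toggle s g = s * g := if_pos h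

theorem toggle_of_not_commute (h : ¬Commute s g) : toggle s g = s * g * s := if_neg h

theorem toggle_involutive (hs : s * s = 1) : Involutive (toggle s) := by
  intro g
  by_cases h : Commute s g
  · have h' : Commute s (s * g) := (commute_mul_left_iff_of_mul_self_eq_one hs).2 h
    rw [toggle_of_commute h, toggle_of_commute h', ← mul_assoc, hs, one_mul]
  · have h' : ¬Commute s (s * g * s) := by
      rwa [commute_mul_right_iff_of_mul_self_eq_one hs, commute_mul_left_iff_of_mul_self_eq_one hs]
    calc toggle s (toggle s g) = s * (s * g * s) * s := by
          rw [toggle_of_not_commute h, toggle_of_not_commute h']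
      _ = s * s * g * (s * s) := by simp only [mul_assoc]
      _ = g := by rw [hs, one_mul, mul_one]

theorem toggle_mul_self_eq_one (hs : s * s = 1) (hg : g * g = 1) :
    toggle s g * toggle s g = 1 := by
  by_cases h : Commute s g
  · rw [toggle_of_commute h, h.symm.mul_mul_mul_comm, hs, hg, one_mul]
  · calc toggle s g * toggle s g = s * g * (s * s) * g * s := by
          simp only [toggle_of_not_commute h, mul_assoc]
      _ = s * (g * g) * s := by simp only [hs, mul_one, mul_assoc]
      _ = 1 := by rw [hg, mul_one, hs]

end Monoid

theorem commute_swap_of_sym2_map_eq {α : Type*} [DecidableEq α] {a b : α} {π : Perm α}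
    (h : s(π a, π b) = s(a, b)) : Commute (swap a b) π := by
  have swap_map : swap (π a) (π b) = swap a b := by
    rcases Sym2.eq_iff.1 h with ⟨ha, hb⟩ | ⟨ha, hb⟩
    · rw [ha, hb]
    · rw [ha, hb, swap_comm]
  calc swap a b * π = swap (π a) (π b) * π := by rw [swap_map]
    _ = π * swap a b := (mul_swap_eq_swap_mul π a b).symm

theorem two_mul_card_filter_of_involutive {ι : Type*} {S : Finset ι} {p : ι → Prop}
    [DecidablePred p] {f : ι → ι} (hf : Involutive f) (hS : ∀ x ∈ S, f x ∈ S)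
    (hp : ∀ x ∈ S, p (f x) ↔ ¬p x) : 2 * #{x ∈ S | p x} = #S := by
  have card_eq : #{x ∈ S | p x} = #{x ∈ S | ¬p x} := by
    refine card_nbij' f f (fun x hx ↦ ?_) (fun x hx ↦ ?_) (fun x _ ↦ hf x) (fun x _ ↦ hf x) <;>
      · simp only [mem_coe, mem_filter] at hx ⊢
        simpa only [hS x hx.1, hp x hx.1, true_and, not_not] using hx.2
  rw [two_mul, ← card_filter_add_card_filter_not (s := S) p, ← card_eq]

section LinearOrder

variable {α : Type*} [LinearOrder α] {a b x y : α}

theorem swap_lt_swap_of_covBy (hab : a ⋖ b) (hxy : x < y) (hne : s(x, y) ≠ s(a, b)) :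
    swap a b x < swap a b y := by
  have a_lt_b : a < b := hab.lt
  have b_le_of_a_lt {z : α} (hz : a < z) : b ≤ z := hab.ge_of_gt hz
  have le_a_of_lt_b {z : α} (hz : z < b) : z ≤ a := hab.le_of_lt hz
  grind

theorem swap_lt_swap_iff_of_covBy (hab : a ⋖ b) (hne : s(x, y) ≠ s(a, b)) :
    swap a b x < swap a b y ↔ x < y := by
  refine ⟨fun h ↦ ?_, fun h ↦ swap_lt_swap_of_covBy hab h hne⟩
  by_contra! hyx
  rcases hyx.eq_or_lt with rfl | hyx
  · exact h.false
  · exact h.not_gt (swap_lt_swap_of_covBy hab hyx (Sym2.eq_swap ▸ hne))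

theorem toggle_swap_apply_lt_iff (hab : a ⋖ b) (π : Perm α) :
    toggle (swap a b) π b < toggle (swap a b) π a ↔ π a < π b := by
  by_cases h : Commute (swap a b) π
  · rw [toggle_of_commute h, h.eq, Perm.mul_apply, Perm.mul_apply, swap_apply_left,
      swap_apply_right]
  · have hne : s(π a, π b) ≠ s(a, b) := mt commute_swap_of_sym2_map_eq h
    simp only [toggle_of_not_commute h, Perm.mul_apply, swap_apply_left, swap_apply_right]
    exact swap_lt_swap_iff_of_covBy hab hne

theorem two_mul_card_filter_mul_self_eq_one_lt [Fintype α] (hab : a ⋖ b) :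
    2 * #{π ∈ ({π | π * π = 1} : Finset (Perm α)) | π b < π a} =
      #({π | π * π = 1} : Finset (Perm α)) := by
  have hs : swap a b * swap a b = 1 := swap_mul_self a b
  refine two_mul_card_filter_of_involutive (toggle_involutive hs) (fun π hπ ↦ ?_) (fun π _ ↦ ?_)
  · rw [mem_filter_univ] at hπ ⊢
    exact toggle_mul_self_eq_one hs hπ
  · rw [toggle_swap_apply_lt_iff hab, not_lt, (π.injective.ne hab.ne).le_iff_lt]

end LinearOrder

theorem castSucc_covBy_succ {m : ℕ} (i : Fin m) : i.castSucc ⋖ i.succ := by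
  simp [Fin.covBy_iff]

theorem descents_eq_card_filter_castSucc {m : ℕ} (π : Perm (Fin (m + 1))) :
    descents π = #{i : Fin m | π i.succ < π i.castSucc} := by
  rw [descents, card_filter, card_filter, Fin.sum_univ_castSucc]
  simp [Fin.succ]

theorem two_mul_sum_descents_involutions (m : ℕ) :
    2 * ∑ π ∈ involutions (m + 1), descents π = m * #(involutions (m + 1)) := by
  calc 2 * ∑ π ∈ involutions (m + 1), descents π
      = 2 * ∑ π ∈ involutions (m + 1), #{i : Fin m | π i.succ < π i.castSucc} := by
        simp only [descents_eq_card_filter_castSucc]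
    _ = 2 * ∑ i : Fin m, #{π ∈ involutions (m + 1) | π i.succ < π i.castSucc} :=
        congrArg (2 * ·) (sum_card_bipartiteAbove_eq_sum_card_bipartiteBelow _)
    _ = ∑ _i : Fin m, #(involutions (m + 1)) := by
        rw [mul_sum]
        exact sum_congr rfl fun i _ ↦ two_mul_card_filter_mul_self_eq_one_lt (castSucc_covBy_succ i)
    _ = m * #(involutions (m + 1)) := by simp

theorem card_involutions_pos (n : ℕ) : 0 < #(involutions n) :=
  card_pos.2 ⟨1, by simp [involutions]⟩

/-- The expected number of descents of a uniformly random involution of `S_n` is `(n-1)/2`;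
equivalently `2 Σ_{π² = 1} des(π) = (n-1) i_n`. -/
theorem mean_descents_involutions (n : ℕ) (hn : 1 ≤ n) :
    (∑ π ∈ involutions n, (descents π : ℝ)) / (involutions n).card = ((n : ℝ) - 1) / 2 ∧
      2 * ∑ π ∈ involutions n, descents π = (n - 1) * (involutions n).card := by
  obtain ⟨m, rfl⟩ := Nat.exists_eq_add_of_le' hn
  have two_mul_sum := two_mul_sum_descents_involutions m
  refine ⟨?_, by rw [two_mul_sum, Nat.add_sub_cancel]⟩
  have card_ne_zero : (#(involutions (m + 1)) : ℝ) ≠ 0 := by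
    exact_mod_cast (card_involutions_pos (m + 1)).ne'
  rw [div_eq_div_iff card_ne_zero two_ne_zero, Nat.cast_succ, add_sub_cancel_right, mul_comm]
  exact_mod_cast two_mul_sum
end
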